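/- Let m, ℓ, k ≥ 1 be integers with gcd(ℓ,k) = 1. Then the partial sums ∑_{2 ≤ n ≤ x, p(n) ≡ ℓ (mod k)} μ(m·n)/n converge, as x → ∞, to −μ(m)/φ(k), where μ is the Möbius function and φ is the Euler totient function. -/

import Mathlib

/-!
Put `a = ℓ mod k` and `g(n) = μ(n) [p(n) ≡ a]` on the integers `n ≥ 2` coprime to `m`, `g(n) = 0`
otherwise (`weight`). Since `μ(m n) = μ(m) μ(n)` for `n` coprime to `m` and `μ(m n) = 0`
otherwise, it suffices to show `∑_{n ≤ N} g(n) / n → -1 / φ(k)`.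

The link with primes in progressions is Alladi's duality (`sum_divisors_weight`): if the largest
prime divisor `q` of `N` exceeds `m`, then `∑_{d ∣ N} g(d) = -[q ≡ a]`, because squarefree
divisors `d > 1` prime to `q` cancel against `q d`, which has the same smallest prime and the
opposite Möbius value, so that only `d = q` remains. Summing over `j ≤ N` turns `∑_{n ≤ N} g(n) ⌊N / n⌋` into minus the number of `j ≤ N` whose largest prime divisor
is `≡ a`, up to `o(N)`. That number is `N / φ(k) + o(N)` (`tendsto_sum_disc_maxFac`): write
`j = n p` with `p` the largest prime, apply the prime number theorem in progressions to the sum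
over `p`, and discard the `j` with only small prime divisors by a bound for smooth numbers
(`card_smooth_le`).

To pass from `∑ g(n) ⌊N / n⌋` to `N ∑ g(n) / n`, Axer's theorem (`axer`) needs
`∑_{n ≤ N} g(n) = o(N)`. This is `tendsto_sum_weight`: up to integers without prime divisor `≤ K`, whose density
`∏_{p ≤ K} (1 - 1 / p)` is small, `g` is a finite combination of functions `μ(n) [gcd(n, Q) = 1]`.

The two analytic inputs, the prime number theorem in progressions (`tendsto_residueClass`) and
`∑_{n ≤ N, gcd(n, Q) = 1} μ(n) = o(N)` (`tendsto_moebius_coprime`), both come from a Wiener–Ikehara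
theorem (`wiener_ikehara`), proved with the Fejér kernel and the Riemann–Lebesgue lemma, together
with the non-vanishing of Dirichlet `L`-functions on the line `Re s = 1`.
-/

open Finset Filter

namespace Alladi
open MeasureTheory Topology

/-! ### The Fejér kernel -/

/-- The Fejér kernel `(sin (w / 2) / (w / 2)) ^ 2`, normalised as the Fourier transform
of the triangle function on `[-1, 1]`. -/
noncomputable def fejer (w : ℝ) : ℝ := Real.sinc (w / 2) ^ 2

lemma fejer_nonneg (w : ℝ) : 0 ≤ fejer w := sq_nonneg _

lemma continuous_fejer : Continuous fejer := by
  unfold fejer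
  exact (Real.continuous_sinc.comp (continuous_id.div_const 2)).pow 2

lemma fejer_le (w : ℝ) : fejer w ≤ 8 * (1 + w ^ 2)⁻¹ := by
  unfold fejer
  rw [← div_eq_mul_inv, le_div_iff₀ (by positivity)]
  have h1 : Real.sinc (w / 2) ^ 2 ≤ 1 := by
    rw [sq_le_one_iff_abs_le_one]; exact Real.abs_sinc_le_one _
  have h2 : Real.sinc (w / 2) ^ 2 * w ^ 2 ≤ 4 := by
    rcases eq_or_ne w 0 with rfl | hw
    · simp
    · rw [Real.sinc_of_ne_zero (by positivity)]
      have : (Real.sin (w / 2) / (w / 2)) ^ 2 * w ^ 2 = 4 * Real.sin (w / 2) ^ 2 := by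
        field_simp; ring
      rw [this]
      nlinarith [Real.sin_sq_le_one (w / 2)]
  nlinarith

lemma integrable_fejer : Integrable fejer := by
  refine Integrable.mono' (integrable_inv_one_add_sq.const_mul 8)
    continuous_fejer.aestronglyMeasurable (Eventually.of_forall fun w => ?_)
  rw [Real.norm_of_nonneg (fejer_nonneg w)]
  exact fejer_le w

lemma integral_fejer_pos : 0 < ∫ w, fejer w := by
  refine integral_pos_of_integrable_nonneg_nonzero (x := 0) continuous_fejer integrable_fejer
    fejer_nonneg ?_
  simp [fejer]

lemma integral_triangle_cos (w : ℝ) :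
    ∫ t in (0 : ℝ)..1, (1 - t) * Real.cos (w * t) = fejer w / 2 := by
  rcases eq_or_ne w 0 with rfl | hw
  · simp only [zero_mul, Real.cos_zero, mul_one]
    rw [intervalIntegral.integral_sub (by simp) (by simp)]
    simp [fejer]
    norm_num
  · have hd : ∀ t ∈ Set.uIcc (0 : ℝ) 1, HasDerivAt
        (fun t => (1 - t) * (Real.sin (w * t) / w) - Real.cos (w * t) / w ^ 2)
        ((1 - t) * Real.cos (w * t)) t := by
      intro t _
      have e : HasDerivAt (fun t : ℝ => w * t) w t := by
        simpa using (hasDerivAt_id t).const_mul w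
      have h1 := (((hasDerivAt_id t).const_sub 1).mul (e.sin.div_const w)).sub
        (e.cos.div_const (w ^ 2))
      refine h1.congr_deriv ?_
      simp only [id]
      field_simp
      ring
    rw [intervalIntegral.integral_eq_sub_of_hasDerivAt hd
      (Continuous.intervalIntegrable (by fun_prop) _ _)]
    unfold fejer
    rw [Real.sinc_of_ne_zero (by positivity)]
    have : Real.cos w = 1 - 2 * Real.sin (w / 2) ^ 2 := by
      have := Real.cos_sq' (w / 2)
      have h2 := Real.cos_two_mul (w / 2)
      rw [show 2 * (w / 2) = w by ring] at h2
      linarith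
    simp [this]
    field_simp
    ring

/-- The Fejér kernel is the Fourier transform of the triangle function. -/
lemma integral_triangle_exp (w : ℝ) :
    ∫ t in (-1 : ℝ)..1, ((1 - |t| : ℝ) : ℂ) * Complex.exp ((w * t : ℝ) * Complex.I)
      = fejer w := by
  have hc : Continuous fun t : ℝ =>
      ((1 - |t| : ℝ) : ℂ) * Complex.exp ((w * t : ℝ) * Complex.I) := by fun_prop
  rw [← intervalIntegral.integral_add_adjacent_intervals (b := 0)
    (hc.intervalIntegrable _ _) (hc.intervalIntegrable _ _)]
  have h1 := intervalIntegral.integral_comp_neg (a := 0) (b := 1) (fun t : ℝ =>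
      ((1 - |t| : ℝ) : ℂ) * Complex.exp ((w * t : ℝ) * Complex.I))
  simp only [neg_zero] at h1
  rw [← h1, ← intervalIntegral.integral_add (Continuous.intervalIntegrable (by fun_prop) _ _)
    (hc.intervalIntegrable _ _)]
  have h2 : ∀ t ∈ Set.uIcc (0 : ℝ) 1,
      ((1 - |-t| : ℝ) : ℂ) * Complex.exp ((w * -t : ℝ) * Complex.I) +
      ((1 - |t| : ℝ) : ℂ) * Complex.exp ((w * t : ℝ) * Complex.I) =
      ((2 * ((1 - t) * Real.cos (w * t)) : ℝ) : ℂ) := by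
    intro t ht
    rw [Set.uIcc_of_le zero_le_one] at ht
    rw [abs_neg, abs_of_nonneg ht.1, ← mul_add]
    push_cast
    rw [mul_neg, add_comm (Complex.exp _), ← Complex.two_cos]
    ring
  rw [intervalIntegral.integral_congr h2, intervalIntegral.integral_ofReal,
    intervalIntegral.integral_const_mul, integral_triangle_cos]
  push_cast; ring

/-- By Fubini, smoothing `β v * exp (-δ v)` with the Fejér kernel amounts to integrating the Laplace
transform of `β` along a segment of the line `Re s = δ`. -/
lemma fejer_laplace {β : ℝ → ℝ} (hβm : Measurable β) {C : ℝ} (hβ : ∀ v, |β v| ≤ C)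
    {δ : ℝ} (hδ : 0 < δ) (lam y : ℝ) :
    ∫ v in Set.Ioi (0 : ℝ), ((β v * Real.exp (-(δ * v)) * fejer (lam * (y - v)) : ℝ) : ℂ) =
    ∫ t in (-1 : ℝ)..1, ((1 - |t| : ℝ) : ℂ) * Complex.exp ((lam * y * t : ℝ) * Complex.I) *
      ∫ v in Set.Ioi (0 : ℝ), (β v : ℂ) * Complex.exp (-((δ + lam * t * Complex.I) * v)) := by
  have h0 : ∀ v t : ℝ, (β v : ℂ) * Complex.exp (-(δ * v : ℝ)) *
      (((1 - |t| : ℝ) : ℂ) * Complex.exp ((lam * (y - v) * t : ℝ) * Complex.I)) =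
      ((1 - |t| : ℝ) : ℂ) * Complex.exp ((lam * y * t : ℝ) * Complex.I) *
      ((β v : ℂ) * Complex.exp (-((δ + lam * t * Complex.I) * v))) := by
    intro v t
    have : Complex.exp (-(δ * v : ℝ)) * Complex.exp ((lam * (y - v) * t : ℝ) * Complex.I) =
      Complex.exp ((lam * y * t : ℝ) * Complex.I) *
        Complex.exp (-((δ + lam * t * Complex.I) * v)) := by
      rw [← Complex.exp_add, ← Complex.exp_add]
      congr 1
      push_cast
      ring
    linear_combination ((1 - |t| : ℝ) : ℂ) * (β v : ℂ) * this
  have h1 : ∀ v, ((β v * Real.exp (-(δ * v)) * fejer (lam * (y - v)) : ℝ) : ℂ) =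
      ∫ t in (-1 : ℝ)..1, (β v : ℂ) * Complex.exp (-(δ * v : ℝ)) *
      (((1 - |t| : ℝ) : ℂ) * Complex.exp ((lam * (y - v) * t : ℝ) * Complex.I)) := by
    intro v
    rw [intervalIntegral.integral_const_mul, integral_triangle_exp]
    push_cast; ring
  simp_rw [h1, h0, intervalIntegral.integral_of_le (by norm_num : (-1 : ℝ) ≤ 1)]
  rw [integral_integral_swap]
  · simp_rw [integral_const_mul]
  · have hb : Integrable (fun z : ℝ × ℝ => (C * Real.exp (-δ * z.1)) * (1 : ℝ))
        ((volume.restrict (Set.Ioi 0)).prod (volume.restrict (Set.Ioc (-1) 1))) := by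
      exact Integrable.mul_prod (f := fun v : ℝ => C * Real.exp (-δ * v))
        (g := fun _ : ℝ => (1 : ℝ)) ((exp_neg_integrableOn_Ioi 0 hδ).const_mul C)
        (integrable_const _)
    refine Integrable.mono' hb ?_ ?_
    · refine Measurable.aestronglyMeasurable ?_
      simp only [Function.uncurry_def]
      fun_prop
    · have : ∀ᵐ z : ℝ × ℝ ∂((volume.restrict (Set.Ioi 0)).prod
          (volume.restrict (Set.Ioc (-1) 1))), z ∈ Set.Ioi (0 : ℝ) ×ˢ Set.Ioc (-1 : ℝ) 1 := by
        rw [Measure.prod_restrict]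
        exact ae_restrict_mem (measurableSet_Ioi.prod measurableSet_Ioc)
      filter_upwards [this] with z hz
      obtain ⟨v, t⟩ := z
      simp only [Function.uncurry_apply_pair]
      have ht : |t| ≤ 1 := abs_le.2 ⟨hz.2.1.le, hz.2.2⟩
      rw [norm_mul, norm_mul, norm_mul, Complex.norm_exp_ofReal_mul_I, Complex.norm_exp,
        Complex.norm_real, Complex.norm_real, Real.norm_eq_abs, Real.norm_eq_abs,
        abs_of_nonneg (by linarith)]
      have hre : (-((δ + lam * t * Complex.I) * v) : ℂ).re = -δ * v := by
        simp
      rw [hre, mul_one, mul_one]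
      have := abs_nonneg t
      calc (1 - |t|) * (|β v| * Real.exp (-δ * v)) ≤ 1 * (C * Real.exp (-δ * v)) := by
            gcongr
            · linarith
            · exact hβ v
        _ = _ := one_mul _

/-! ### A Tauberian theorem for Laplace transforms -/

lemma integrable_fejer_comp {lam : ℝ} (hlam : 0 < lam) (y : ℝ) :
    Integrable fun v => fejer (lam * (y - v)) := by
  have := (integrable_fejer.comp_mul_left' hlam.ne').comp_sub_left y
  exact this

/-- If the Laplace transform of a bounded `β` extends continuously to the imaginary axis, then the
averages of `β` against translates of the Fejér kernel tend to zero (Riemann–Lebesgue). -/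
lemma tendsto_fejer_average {β : ℝ → ℝ} (hβm : Measurable β) {C : ℝ} (hβ : ∀ v, |β v| ≤ C)
    {H : ℂ → ℂ} (hH : ContinuousOn H {s | 0 ≤ s.re})
    (hL : ∀ s : ℂ, 0 < s.re →
      ∫ v in Set.Ioi (0 : ℝ), (β v : ℂ) * Complex.exp (-(s * v)) = H s)
    {lam : ℝ} (hlam : 0 < lam) :
    Tendsto (fun y => ∫ v in Set.Ioi (0 : ℝ), β v * fejer (lam * (y - v))) atTop (𝓝 0) := by
  have hC : 0 ≤ C := (abs_nonneg _).trans (hβ 0)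
  have key : ∀ y : ℝ, ((∫ v in Set.Ioi (0 : ℝ), β v * fejer (lam * (y - v)) : ℝ) : ℂ) =
      ∫ t in (-1 : ℝ)..1, ((1 - |t| : ℝ) : ℂ) * Complex.exp ((lam * y * t : ℝ) * Complex.I) *
        H (lam * t * Complex.I) := by
    intro y
    have h1 : Tendsto (fun δ : ℝ => ∫ v in Set.Ioi (0 : ℝ),
        ((β v * Real.exp (-(δ * v)) * fejer (lam * (y - v)) : ℝ) : ℂ)) (𝓝[>] 0)
        (𝓝 (∫ v in Set.Ioi (0 : ℝ), ((β v * fejer (lam * (y - v)) : ℝ) : ℂ))) := by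
      refine tendsto_integral_filter_of_dominated_convergence
        (fun v => C * fejer (lam * (y - v))) ?_ ?_ ?_ ?_
      · refine Eventually.of_forall fun δ => Measurable.aestronglyMeasurable ?_
        have := continuous_fejer.measurable
        fun_prop
      · filter_upwards [self_mem_nhdsWithin] with δ hδ
        filter_upwards [ae_restrict_mem measurableSet_Ioi] with v hv
        rw [Complex.norm_real, norm_mul, norm_mul, Real.norm_of_nonneg (fejer_nonneg _),
          Real.norm_of_nonneg (Real.exp_pos _).le, Real.norm_eq_abs]
        refine mul_le_mul_of_nonneg_right ?_ (fejer_nonneg _)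
        have : Real.exp (-(δ * v)) ≤ 1 := by
          rw [Real.exp_le_one_iff]
          have := mul_pos (Set.mem_Ioi.1 hδ) (Set.mem_Ioi.1 hv)
          linarith
        calc _ ≤ C * 1 := mul_le_mul (hβ v) this (Real.exp_pos _).le hC
          _ = C := mul_one C
      · exact ((integrable_fejer_comp hlam y).const_mul C).integrableOn
      · refine Eventually.of_forall fun v => ?_
        have : Continuous fun δ : ℝ =>
          ((β v * Real.exp (-(δ * v)) * fejer (lam * (y - v)) : ℝ) : ℂ) := by fun_prop
        have := (this.tendsto 0).mono_left (nhdsWithin_le_nhds (s := Set.Ioi (0 : ℝ)))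
        simpa using this
    have hcomp : IsCompact (Set.Icc (0 : ℝ) 1 ×ℂ Set.Icc (-lam) lam) :=
      isCompact_Icc.reProdIm isCompact_Icc
    obtain ⟨M, hM⟩ := hcomp.exists_bound_of_continuousOn (f := H)
      (hH.mono fun s hs => by
        rw [Complex.mem_reProdIm] at hs; exact hs.1.1)
    have hM0 : 0 ≤ M := (norm_nonneg _).trans (hM 0 (by
      rw [Complex.mem_reProdIm]; simp [hlam.le]))
    have h2 : Tendsto (fun δ : ℝ => ∫ t in (-1 : ℝ)..1, ((1 - |t| : ℝ) : ℂ) *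
        Complex.exp ((lam * y * t : ℝ) * Complex.I) * H (δ + lam * t * Complex.I)) (𝓝[>] 0)
        (𝓝 (∫ t in (-1 : ℝ)..1, ((1 - |t| : ℝ) : ℂ) *
          Complex.exp ((lam * y * t : ℝ) * Complex.I) * H (lam * t * Complex.I))) := by
      refine intervalIntegral.tendsto_integral_filter_of_dominated_convergence
        (fun _ => M) ?_ ?_ ?_ ?_
      · filter_upwards [self_mem_nhdsWithin] with δ hδ
        refine Continuous.aestronglyMeasurable ?_
        refine Continuous.mul (by fun_prop) (hH.comp_continuous (by fun_prop) fun t => ?_)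
        simpa using (Set.mem_Ioi.1 hδ).le
      · have : Set.Ioo (0 : ℝ) 1 ∈ 𝓝[>] (0 : ℝ) := Ioo_mem_nhdsGT one_pos
        filter_upwards [this] with δ hδ
        refine Eventually.of_forall fun t ht => ?_
        rw [Set.uIoc_of_le (by norm_num)] at ht
        have ht' : |t| ≤ 1 := abs_le.2 ⟨ht.1.le, ht.2⟩
        rw [norm_mul, norm_mul, Complex.norm_exp_ofReal_mul_I, mul_one, Complex.norm_real,
          Real.norm_of_nonneg (by linarith)]
        have hb : ‖H (δ + lam * t * Complex.I)‖ ≤ M := by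
          refine hM _ ?_
          rw [Complex.mem_reProdIm]
          simp only [Complex.add_re, Complex.ofReal_re, Complex.mul_re, Complex.ofReal_im,
            Complex.I_re, Complex.I_im, Complex.add_im, Complex.mul_im, Set.mem_Icc]
          refine ⟨⟨?_, ?_⟩, ?_, ?_⟩ <;> nlinarith [hδ.1, hδ.2, ht.1, ht.2]
        have := abs_nonneg t
        calc _ ≤ 1 * M := mul_le_mul (by linarith) hb (norm_nonneg _) zero_le_one
          _ = M := one_mul M
      · simp
      · refine Eventually.of_forall fun t _ => ?_
        refine Tendsto.const_mul _ ?_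
        have hmem : (lam * t * Complex.I : ℂ) ∈ {s : ℂ | 0 ≤ s.re} := by simp
        refine (hH _ hmem).tendsto.comp (tendsto_nhdsWithin_iff.2 ⟨?_, ?_⟩)
        · have : Continuous fun δ : ℝ => (δ + lam * t * Complex.I : ℂ) := by fun_prop
          simpa using (this.tendsto 0).mono_left
            (nhdsWithin_le_nhds (s := Set.Ioi (0 : ℝ)))
        · filter_upwards [self_mem_nhdsWithin] with δ hδ
          simpa using (Set.mem_Ioi.1 hδ).le
    rw [← integral_complex_ofReal]
    refine tendsto_nhds_unique h1 (h2.congr' ?_)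
    filter_upwards [self_mem_nhdsWithin] with δ hδ
    rw [fejer_laplace hβm hβ hδ]
    refine intervalIntegral.integral_congr fun t _ => ?_
    rw [hL _ (by simpa using hδ)]
  have hRL := Real.tendsto_integral_exp_smul_cocompact
    ((Set.Ioc (-1 : ℝ) 1).indicator fun t : ℝ => ((1 - |t| : ℝ) : ℂ) * H (lam * t * Complex.I))
  have hlin : Tendsto (fun y : ℝ => -(lam / (2 * Real.pi)) * y) atTop (cocompact ℝ) := by
    have : Tendsto (fun y : ℝ => -(lam / (2 * Real.pi)) * y) atTop atBot :=
      tendsto_id.const_mul_atTop_of_neg (by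
        have := Real.pi_pos
        rw [neg_lt_zero]; positivity)
    exact this.mono_right atBot_le_cocompact
  have h3 := hRL.comp hlin
  have h4 : Tendsto (fun y : ℝ =>
      ((∫ v in Set.Ioi (0 : ℝ), β v * fejer (lam * (y - v)) : ℝ) : ℂ)) atTop (𝓝 0) := by
    refine h3.congr fun y => ?_
    rw [key, Function.comp_apply, intervalIntegral.integral_of_le (by norm_num : (-1 : ℝ) ≤ 1),
      ← integral_indicator measurableSet_Ioc]
    refine integral_congr_ae (Eventually.of_forall fun t => ?_)
    by_cases ht : t ∈ Set.Ioc (-1 : ℝ) 1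
    · simp only [Set.indicator_of_mem ht, Circle.smul_def, Real.fourierChar_apply, smul_eq_mul]
      rw [show 2 * Real.pi * -(t * (-(lam / (2 * Real.pi)) * y)) = lam * y * t by
        have := Real.pi_pos.ne'
        field_simp]
      ring
    · simp [Set.indicator_of_notMem ht]
  have h5 := (Complex.continuous_re.tendsto 0).comp h4
  simpa [Function.comp_def] using h5

/-- Tauberian theorem for a bounded nonnegative `B` that is slowly decreasing in the sense that
`B v * exp v` is monotone. On a short interval such a `B` is nearly bounded below by its left and
above by its right end value, so the Fejér averages of `B - A` control its pointwise values. -/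
theorem tendsto_of_laplace {B : ℝ → ℝ} (hBm : Measurable B) {C A : ℝ} (hB0 : ∀ v, 0 ≤ B v)
    (hBC : ∀ v, B v ≤ C) (hslow : ∀ u v, u ≤ v → B u * Real.exp (-(v - u)) ≤ B v)
    {H : ℂ → ℂ} (hH : ContinuousOn H {s | 0 ≤ s.re})
    (hL : ∀ s : ℂ, 0 < s.re →
      ∫ v in Set.Ioi (0 : ℝ), ((B v - A : ℝ) : ℂ) * Complex.exp (-(s * v)) = H s) :
    Tendsto B atTop (𝓝 A) := by
  set D := C + |A| with hD
  have hC0 : 0 ≤ C := (hB0 0).trans (hBC 0)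
  have hD0 : 0 ≤ D := by positivity
  have hβ : ∀ v, |B v - A| ≤ D := fun v => by
    refine (abs_sub _ _).trans ?_
    rw [abs_of_nonneg (hB0 v)]
    linarith [hBC v]
  have main : ∀ r > 0, ∀ η > 0, ∀ᶠ y in atTop,
      B (y - r) * Real.exp (-(2 * r)) - A ≤ η ∧ -η ≤ B (y + r) * Real.exp (2 * r) - A := by
    intro r hr η hη
    set I := ∫ w, fejer w with hI
    have hIpos : 0 < I := integral_fejer_pos
    have hlim : Tendsto (fun a : ℝ => ∫ w in (-a)..a, fejer w) atTop (𝓝 I) :=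
      intervalIntegral_tendsto_integral integrable_fejer tendsto_neg_atTop_atBot tendsto_id
    have hlim2 : Tendsto (fun a : ℝ => η / 2 * (∫ w in (-a)..a, fejer w) -
        D * (I - ∫ w in (-a)..a, fejer w)) atTop (𝓝 (η / 2 * I - D * (I - I))) :=
      (hlim.const_mul _).sub ((tendsto_const_nhds.sub hlim).const_mul D)
    have hpos : 0 < η / 2 * I - D * (I - I) := by simp; positivity
    obtain ⟨a, ha1, ha2, ha0⟩ := ((hlim2.eventually (lt_mem_nhds hpos)).and
      ((hlim.eventually (lt_mem_nhds hIpos)).and (eventually_gt_atTop 0))).exists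
    set κ := ∫ w in (-a)..a, fejer w with hκ
    set lam := a / r with hlam
    have hlam0 : 0 < lam := by positivity
    have hJ := tendsto_fejer_average (hBm.sub_const A) hβ hH hL hlam0
    have hJ' : ∀ᶠ y in atTop, |∫ v in Set.Ioi (0 : ℝ), (B v - A) * fejer (lam * (y - v))|
        < η / 2 * κ / lam := by
      have := hJ.abs
      rw [abs_zero] at this
      exact this.eventually (gt_mem_nhds (by positivity))
    filter_upwards [hJ', eventually_gt_atTop r] with y hy hyr
    -- `a` was chosen so that nearly all of the mass of the kernel lies on `[y - r, y + r]`
    have hker := integrable_fejer_comp hlam0 y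
    have hsub : Set.Icc (y - r) (y + r) ⊆ Set.Ioi 0 := fun v hv => by
      have := hv.1
      simp only [Set.mem_Ioi]; linarith
    have hin : ∫ v in Set.Icc (y - r) (y + r), fejer (lam * (y - v)) = κ / lam := by
      rw [integral_Icc_eq_integral_Ioc, ← intervalIntegral.integral_of_le (by linarith)]
      have := intervalIntegral.integral_comp_sub_left (a := y - r) (b := y + r)
        (fun w => fejer (lam * w)) y
      rw [this, intervalIntegral.integral_comp_mul_left _ hlam0.ne']
      have e1 : lam * (y - (y + r)) = -a := by rw [hlam]; field_simp; ring
      have e2 : lam * (y - (y - r)) = a := by rw [hlam]; field_simp; ring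
      rw [e1, e2, smul_eq_mul]
      field_simp
      rfl
    have htot : ∫ v, fejer (lam * (y - v)) = I / lam := by
      have := integral_sub_left_eq_self (fun w => fejer (lam * w)) volume y
      rw [this, Measure.integral_comp_mul_left, abs_of_pos (by positivity), smul_eq_mul]
      field_simp
      rfl
    have hout : ∫ v in Set.Ioi 0 \ Set.Icc (y - r) (y + r), fejer (lam * (y - v))
        ≤ (I - κ) / lam := by
      have h1 : ∫ v in Set.Ioi 0 \ Set.Icc (y - r) (y + r), fejer (lam * (y - v)) ≤
          ∫ v in (Set.Icc (y - r) (y + r))ᶜ, fejer (lam * (y - v)) :=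
        setIntegral_mono_set hker.integrableOn (Eventually.of_forall fun _ => fejer_nonneg _)
          (Eventually.of_forall fun v hv => hv.2)
      have h2 := integral_add_compl (measurableSet_Icc (a := y - r) (b := y + r)) hker
      rw [hin, htot] at h2
      rw [sub_div]
      linarith
    have hkerβ : Integrable (fun v => (B v - A) * fejer (lam * (y - v))) := by
      refine hker.bdd_mul (c := D) (hBm.sub_const A).aestronglyMeasurable
        (Eventually.of_forall fun v => hβ v)
    have hsplit : ∫ v in Set.Ioi (0 : ℝ), (B v - A) * fejer (lam * (y - v)) =
        (∫ v in Set.Icc (y - r) (y + r), (B v - A) * fejer (lam * (y - v))) +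
        ∫ v in Set.Ioi 0 \ Set.Icc (y - r) (y + r), (B v - A) * fejer (lam * (y - v)) := by
      rw [setIntegral_sdiff measurableSet_Icc hkerβ.integrableOn hsub]
      ring
    have houtβ : |∫ v in Set.Ioi 0 \ Set.Icc (y - r) (y + r), (B v - A) * fejer (lam * (y - v))|
        ≤ D * ((I - κ) / lam) := by
      calc _ ≤ ∫ v in Set.Ioi 0 \ Set.Icc (y - r) (y + r), |(B v - A) * fejer (lam * (y - v))| :=
            abs_integral_le_integral_abs
        _ ≤ ∫ v in Set.Ioi 0 \ Set.Icc (y - r) (y + r), D * fejer (lam * (y - v)) := by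
            refine setIntegral_mono hkerβ.abs.integrableOn (hker.const_mul D).integrableOn
              fun v => ?_
            simp only
            rw [abs_mul, abs_of_nonneg (fejer_nonneg _)]
            exact mul_le_mul_of_nonneg_right (hβ v) (fejer_nonneg _)
        _ ≤ _ := by
            rw [integral_const_mul]
            exact mul_le_mul_of_nonneg_left hout hD0
    have hlow : (B (y - r) * Real.exp (-(2 * r)) - A) * (κ / lam) ≤
        ∫ v in Set.Icc (y - r) (y + r), (B v - A) * fejer (lam * (y - v)) := by
      rw [← hin, ← integral_const_mul]
      refine setIntegral_mono_on (hker.const_mul _).integrableOn hkerβ.integrableOn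
        measurableSet_Icc fun v hv => mul_le_mul_of_nonneg_right ?_ (fejer_nonneg _)
      have h1 := hslow (y - r) v hv.1
      have h2 : B (y - r) * Real.exp (-(2 * r)) ≤ B (y - r) * Real.exp (-(v - (y - r))) :=
        mul_le_mul_of_nonneg_left (Real.exp_le_exp.2 (by linarith [hv.2])) (hB0 _)
      linarith
    have hupp : ∫ v in Set.Icc (y - r) (y + r), (B v - A) * fejer (lam * (y - v)) ≤
        (B (y + r) * Real.exp (2 * r) - A) * (κ / lam) := by
      rw [← hin, ← integral_const_mul]
      refine setIntegral_mono_on hkerβ.integrableOn (hker.const_mul _).integrableOn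
        measurableSet_Icc fun v hv => mul_le_mul_of_nonneg_right ?_ (fejer_nonneg _)
      have h1 := hslow v (y + r) hv.2
      have h2 : B v ≤ B (y + r) * Real.exp (y + r - v) := by
        calc B v = B v * Real.exp (-(y + r - v)) * Real.exp (y + r - v) := by
              rw [mul_assoc, ← Real.exp_add]; simp
          _ ≤ _ := mul_le_mul_of_nonneg_right h1 (Real.exp_pos _).le
      have h3 : B (y + r) * Real.exp (y + r - v) ≤ B (y + r) * Real.exp (2 * r) :=
        mul_le_mul_of_nonneg_left (Real.exp_le_exp.2 (by linarith [hv.1])) (hB0 _)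
      linarith
    have hk : 0 < κ / lam := by positivity
    have htail : D * ((I - κ) / lam) ≤ η / 2 * (κ / lam) := by
      rw [← mul_div_assoc, ← mul_div_assoc]
      exact div_le_div_of_nonneg_right (by linarith) hlam0.le
    rw [hsplit, mul_div_assoc] at hy
    have hy1 := abs_lt.1 hy
    have hy2 := abs_le.1 houtβ
    constructor
    · refine le_of_mul_le_mul_right ?_ hk
      linarith
    · refine le_of_mul_le_mul_right ?_ hk
      linarith
  rw [tendsto_order]
  constructor
  · intro c hc
    -- `main` is applied with `η = r`, both small
    have h1 : Tendsto (fun r : ℝ => (A - r) * Real.exp (-(2 * r))) (𝓝[>] 0) (𝓝 A) := by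
      have : Continuous fun r : ℝ => (A - r) * Real.exp (-(2 * r)) := by fun_prop
      simpa using (this.tendsto 0).mono_left (nhdsWithin_le_nhds (s := Set.Ioi (0 : ℝ)))
    obtain ⟨r, hr1, hr0⟩ := ((h1.eventually (lt_mem_nhds hc)).and self_mem_nhdsWithin).exists
    have := (tendsto_atTop_add_const_right atTop (-r) tendsto_id).eventually (main r hr0 r hr0)
    filter_upwards [this] with y hy
    have h2 := hy.2
    simp only [id, neg_add_cancel_right] at h2
    have h3 : A - r ≤ B y * Real.exp (2 * r) := by linarith
    have h4 := mul_le_mul_of_nonneg_right h3 (Real.exp_pos (-(2 * r))).le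
    rw [mul_assoc, ← Real.exp_add, add_neg_cancel, Real.exp_zero, mul_one] at h4
    linarith
  · intro c hc
    have h1 : Tendsto (fun r : ℝ => (A + r) * Real.exp (2 * r)) (𝓝[>] 0) (𝓝 A) := by
      have : Continuous fun r : ℝ => (A + r) * Real.exp (2 * r) := by fun_prop
      simpa using (this.tendsto 0).mono_left (nhdsWithin_le_nhds (s := Set.Ioi (0 : ℝ)))
    obtain ⟨r, hr1, hr0⟩ := ((h1.eventually (gt_mem_nhds hc)).and self_mem_nhdsWithin).exists
    have := (tendsto_atTop_add_const_right atTop r tendsto_id).eventually (main r hr0 r hr0)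
    filter_upwards [this] with y hy
    have h2 := hy.1
    simp only [id, add_sub_cancel_right] at h2
    have h3 : B y * Real.exp (-(2 * r)) ≤ A + r := by linarith
    have h4 := mul_le_mul_of_nonneg_right h3 (Real.exp_pos (2 * r)).le
    rw [mul_assoc, ← Real.exp_add, neg_add_cancel, Real.exp_zero, mul_one] at h4
    linarith

/-! ### Wiener–Ikehara and its arithmetic consequences -/

/-- Wiener–Ikehara theorem for Dirichlet series with nonnegative coefficients whose partial sums are
already known to be `O(n)`. -/
theorem wiener_ikehara {a : ℕ → ℝ} (ha : ∀ n, 0 ≤ a n) {C A : ℝ}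
    (hC : ∀ n : ℕ, ∑ i ∈ Icc 1 n, a i ≤ C * n) {G : ℂ → ℂ}
    (hG : ContinuousOn G {s | 1 ≤ s.re})
    (hGL : ∀ s : ℂ, 1 < s.re → G s = LSeries (fun n => (a n : ℂ)) s - A / (s - 1)) :
    Tendsto (fun n : ℕ => (∑ i ∈ Icc 1 n, a i) / n) atTop (𝓝 A) := by
  set S : ℝ → ℝ := fun t => ∑ i ∈ Icc 1 ⌊t⌋₊, a i with hS
  have hSmono : Monotone S := fun t u htu =>
    sum_le_sum_of_subset_of_nonneg (Icc_subset_Icc_right (Nat.floor_mono htu))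
      fun i _ _ => ha i
  have hS0 : ∀ t, 0 ≤ S t := fun t => sum_nonneg fun i _ => ha i
  have hC0 : 0 ≤ C := by
    have := hC 1
    simp only [Icc_self, sum_singleton, Nat.cast_one, mul_one] at this
    exact (ha 1).trans this
  have hSC : ∀ t, 0 ≤ t → S t ≤ C * t := fun t ht =>
    (hC _).trans (mul_le_mul_of_nonneg_left (Nat.floor_le ht) hC0)
  set B : ℝ → ℝ := fun v => S (Real.exp v) * Real.exp (-v) with hB
  have hBm : Measurable B :=
    (hSmono.measurable.comp Real.measurable_exp).mul (Real.measurable_exp.comp measurable_neg)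
  have hB0 : ∀ v, 0 ≤ B v := fun v => mul_nonneg (hS0 _) (Real.exp_pos _).le
  have hBC : ∀ v, B v ≤ C := fun v => by
    calc B v ≤ C * Real.exp v * Real.exp (-v) :=
          mul_le_mul_of_nonneg_right (hSC _ (Real.exp_pos v).le) (Real.exp_pos _).le
      _ = C := by rw [mul_assoc, ← Real.exp_add]; simp
  have hslow : ∀ u v, u ≤ v → B u * Real.exp (-(v - u)) ≤ B v := fun u v huv => by
    simp only [hB]
    rw [mul_assoc, ← Real.exp_add, show -u + -(v - u) = -v by ring]
    exact mul_le_mul_of_nonneg_right (hSmono (Real.exp_le_exp.2 huv)) (Real.exp_pos _).le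
  -- the L-series as a Laplace transform, after `t = exp v`
  have hlap : ∀ s : ℂ, 0 < s.re → LSeries (fun n => (a n : ℂ)) (1 + s) =
      (1 + s) * ∫ v in Set.Ioi (0 : ℝ), (B v : ℂ) * Complex.exp (-(s * v)) := by
    intro s hs
    rw [LSeries_eq_mul_integral_of_nonneg a zero_le_one (by simpa using hs) ?_ ha]
    · congr 1
      have himg : Real.exp '' Set.Ioi 0 = Set.Ioi 1 := by
        ext t
        constructor
        · rintro ⟨v, hv, rfl⟩
          exact Real.one_lt_exp_iff.2 hv
        · intro ht
          have ht' : (1 : ℝ) < t := ht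
          exact ⟨Real.log t, Real.log_pos ht', Real.exp_log (by linarith)⟩
      rw [← himg, integral_image_eq_integral_abs_deriv_smul measurableSet_Ioi
        (fun v _ => (Real.hasDerivAt_exp v).hasDerivWithinAt) Real.exp_injective.injOn]
      refine setIntegral_congr_fun measurableSet_Ioi fun v _ => ?_
      simp only [hB, hS]
      rw [abs_of_pos (Real.exp_pos v), Complex.real_smul,
        Complex.cpow_def_of_ne_zero (by exact_mod_cast (Real.exp_pos v).ne'),
        ← Complex.ofReal_log (Real.exp_pos v).le, Real.log_exp]
      push_cast
      have : Complex.exp v * Complex.exp (v * -(1 + s + 1)) =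
          Complex.exp (-v) * Complex.exp (-(s * v)) := by
        rw [← Complex.exp_add, ← Complex.exp_add]
        congr 1
        ring
      linear_combination (∑ i ∈ Icc 1 ⌊Real.exp v⌋₊, (a i : ℂ)) * this
    · simp only [Real.rpow_one]
      refine Asymptotics.IsBigO.of_bound C (Eventually.of_forall fun n => ?_)
      rw [Real.norm_of_nonneg (sum_nonneg fun i _ => ha i), Real.norm_of_nonneg (by positivity)]
      exact hC n
  have hHc : ContinuousOn (fun s : ℂ => (G (1 + s) - A) / (1 + s)) {s | 0 ≤ s.re} := by
    refine ContinuousOn.div ((hG.comp (by fun_prop) fun s hs => ?_).sub continuousOn_const)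
      (by fun_prop) fun s hs h => ?_
    · simpa using hs
    · have h2 := congrArg Complex.re h
      simp at h2
      have : 0 ≤ s.re := hs
      linarith
  have hlim := tendsto_of_laplace hBm hB0 hBC hslow hHc (A := A) (by
    intro s hs
    have hs0 : s ≠ 0 := fun h => by simp [h] at hs
    have hs1 : 1 + s ≠ 0 := fun h => by
      have h2 := congrArg Complex.re h
      simp at h2
      linarith
    have hexp : ∀ v : ℝ, Complex.exp (-(s * v)) = Complex.exp (-s * v) := fun v => by
      rw [neg_mul]
    have hei : IntegrableOn (fun v : ℝ => Complex.exp (-(s * v))) (Set.Ioi 0) := by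
      simp_rw [hexp]
      exact integrableOn_exp_mul_complex_Ioi (by simpa using hs) 0
    have hBi : IntegrableOn (fun v : ℝ => (B v : ℂ) * Complex.exp (-(s * v))) (Set.Ioi 0) := by
      refine Integrable.bdd_mul (c := C) hei
        (Complex.measurable_ofReal.comp hBm).aestronglyMeasurable
        (Eventually.of_forall fun v => ?_)
      rw [Complex.norm_real, Real.norm_of_nonneg (hB0 v)]
      exact hBC v
    have hAi : ∫ v in Set.Ioi (0 : ℝ), (A : ℂ) * Complex.exp (-(s * v)) = A / s := by
      rw [integral_const_mul]
      simp_rw [hexp]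
      rw [integral_exp_mul_complex_Ioi (by simpa using hs) 0]
      simp
      field_simp
    have hBl : ∫ v in Set.Ioi (0 : ℝ), (B v : ℂ) * Complex.exp (-(s * v)) =
        LSeries (fun n => (a n : ℂ)) (1 + s) / (1 + s) := by
      rw [hlap s hs]; field_simp
    have : ∀ v : ℝ, ((B v - A : ℝ) : ℂ) * Complex.exp (-(s * v)) =
        (B v : ℂ) * Complex.exp (-(s * v)) - (A : ℂ) * Complex.exp (-(s * v)) := fun v => by
      push_cast; ring
    simp_rw [this]
    rw [integral_sub hBi (hei.const_mul _), hAi, hBl, hGL (1 + s) (by simpa using hs)]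
    rw [add_sub_cancel_left]
    field_simp
    ring)
  have hlog : Tendsto (fun n : ℕ => Real.log n) atTop atTop :=
    Real.tendsto_log_atTop.comp tendsto_natCast_atTop_atTop
  refine (hlim.comp hlog).congr' ?_
  filter_upwards [eventually_gt_atTop 0] with n hn
  have hn' : (0 : ℝ) < n := by exact_mod_cast hn
  simp only [hB, hS, Function.comp_apply]
  rw [Real.exp_neg, Real.exp_log hn', Nat.floor_natCast, div_eq_mul_inv]

/-- Prime number theorem in arithmetic progressions, for the von Mangoldt function. -/
lemma tendsto_residueClass {k : ℕ} [NeZero k] {a : ZMod k} (ha : IsUnit a) :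
    Tendsto (fun n : ℕ =>
      (∑ i ∈ Icc 1 n, ArithmeticFunction.vonMangoldt.residueClass a i) / n) atTop
      (𝓝 ((k.totient : ℝ)⁻¹)) := by
  refine wiener_ikehara (ArithmeticFunction.vonMangoldt.residueClass_nonneg a)
    (C := Real.log 4 + 4) ?_
    (ArithmeticFunction.vonMangoldt.continuousOn_LFunctionResidueClassAux a) ?_
  · intro n
    calc ∑ i ∈ Icc 1 n, ArithmeticFunction.vonMangoldt.residueClass a i
        ≤ ∑ i ∈ Icc 1 n, ArithmeticFunction.vonMangoldt i :=
          sum_le_sum fun i _ => ArithmeticFunction.vonMangoldt.residueClass_le a i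
      _ = Chebyshev.psi n := by
          rw [Chebyshev.psi, Nat.floor_natCast]
          rfl
      _ ≤ _ := Chebyshev.psi_le_const_mul_self (by positivity)
  · intro s hs
    have := ArithmeticFunction.vonMangoldt.eqOn_LFunctionResidueClassAux ha hs
    simpa using this

/-- Wiener–Ikehara applied to the nonnegative coefficients `1 + μ(i) [gcd(i, Q) = 1]`, whose
`L`-series is `ζ(s) + 1 / L(s, χ₀)` with `χ₀` the trivial character mod `Q`. -/
lemma tendsto_moebius_coprime {Q : ℕ} (hQ : Q ≠ 0) :
    Tendsto (fun n : ℕ => (∑ i ∈ Icc 1 n,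
      if i.Coprime Q then (ArithmeticFunction.moebius i : ℝ) else 0) / n) atTop (𝓝 0) := by
  have : NeZero Q := ⟨hQ⟩
  set b : ℕ → ℝ := fun i => if i.Coprime Q then (ArithmeticFunction.moebius i : ℝ) else 0 with hb
  have hb1 : ∀ i, |b i| ≤ 1 := fun i => by
    simp only [hb]
    split_ifs
    · exact_mod_cast ArithmeticFunction.abs_moebius_le_one
    · simp
  have hbχ : ∀ i, (b i : ℂ) =
      (1 : DirichletCharacter ℂ Q) i * (ArithmeticFunction.moebius i : ℂ) := fun i => by
    simp only [hb]
    split_ifs with h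
    · rw [MulChar.one_apply ((ZMod.isUnit_iff_coprime i Q).2 h)]
      simp
    · rw [MulChar.map_nonunit _ (by rwa [ZMod.isUnit_iff_coprime i Q])]
      simp
  have hmain : Tendsto (fun n : ℕ => (∑ i ∈ Icc 1 n, (1 + b i)) / n) atTop (𝓝 1) := by
    refine wiener_ikehara (fun i => by linarith [(abs_le.1 (hb1 i)).1]) (C := 2) ?_
      (G := fun s => (Function.update (fun s => riemannZeta s - 1 / (s - 1)) 1
          (Real.eulerMascheroniConstant : ℂ)) s +
        (s - 1) / DirichletCharacter.LFunctionTrivChar₁ Q s) ?_ ?_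
    · intro n
      calc ∑ i ∈ Icc 1 n, (1 + b i) ≤ ∑ i ∈ Icc 1 n, (2 : ℝ) :=
            sum_le_sum fun i _ => by linarith [(abs_le.1 (hb1 i)).2]
        _ = 2 * n := by simp; ring
    · refine ContinuousOn.add (Continuous.continuousOn ?_) (ContinuousOn.div (by fun_prop)
        (DirichletCharacter.differentiable_LFunctionTrivChar₁ Q).continuous.continuousOn ?_)
      · rw [continuous_iff_continuousAt]
        intro s
        rcases eq_or_ne s 1 with rfl | hs
        · rw [continuousAt_update_same]
          exact tendsto_riemannZeta_sub_one_div
        · rw [continuousAt_update_of_ne hs]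
          refine (differentiableAt_riemannZeta hs).continuousAt.sub ?_
          exact continuousAt_const.div (by fun_prop) (sub_ne_zero.2 hs)
      · intro s hs
        rcases eq_or_ne s 1 with rfl | hs1
        · exact DirichletCharacter.LFunctionTrivChar₁_apply_one_ne_zero Q
        · rw [DirichletCharacter.LFunctionTrivChar₁, Function.update_of_ne hs1]
          exact mul_ne_zero (sub_ne_zero.2 hs1)
            (DirichletCharacter.LFunction_ne_zero_of_one_le_re 1 (.inr hs1) hs)
    · intro s hs
      have hs1 : s ≠ 1 := fun h => by simp [h] at hs
      have hμ : LSeriesSummable (fun n => (b n : ℂ)) s := by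
        have := DirichletCharacter.LSeriesSummable_mul (1 : DirichletCharacter ℂ Q)
          (ArithmeticFunction.LSeriesSummable_moebius_iff.mpr hs)
        convert this using 1
        ext i
        exact hbχ i
      have hsum : LSeries (fun n => ((1 + b n : ℝ) : ℂ)) s =
          LSeries 1 s + LSeries (fun n => (b n : ℂ)) s := by
        rw [← LSeries_add (LSeriesSummable_one_iff.2 hs) hμ]
        congr 1
        ext i
        simp
      have hinv := DirichletCharacter.LSeries.mul_mu_eq_one (1 : DirichletCharacter ℂ Q) hs
      rw [← DirichletCharacter.LFunction_eq_LSeries _ hs] at hinv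
      have hb' : (fun n : ℕ => (b n : ℂ)) = (fun n : ℕ => (1 : DirichletCharacter ℂ Q) n) *
          fun n : ℕ => (ArithmeticFunction.moebius n : ℂ) := by
        ext i
        exact hbχ i
      rw [hsum, LSeries_one_eq_riemannZeta hs, DirichletCharacter.LFunctionTrivChar₁,
        Function.update_of_ne hs1, Function.update_of_ne hs1, hb',
        eq_div_of_mul_eq (left_ne_zero_of_mul_eq_one hinv) ((mul_comm _ _).trans hinv)]
      have := left_ne_zero_of_mul_eq_one hinv
      have hs2 := sub_ne_zero.2 hs1
      simp only [DirichletCharacter.LFunctionTrivChar]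
      field_simp
      push_cast
      ring
  have h2 := hmain.sub_const 1
  rw [sub_self] at h2
  refine h2.congr' ?_
  filter_upwards [eventually_gt_atTop 0] with n hn
  have hn' : (n : ℝ) ≠ 0 := by exact_mod_cast hn.ne'
  rw [sum_add_distrib]
  simp
  field_simp
  ring

/-! ### Primes in residue classes -/

/-- Indicator of the residue class `a` mod `k`, minus its density `1 / φ(k)` among the primes. -/
noncomputable def disc {k : ℕ} (a : ZMod k) (n : ℕ) : ℝ :=
  (if (n : ZMod k) = a then 1 else 0) - (k.totient : ℝ)⁻¹

lemma abs_disc_le {k : ℕ} [NeZero k] (a : ZMod k) (n : ℕ) : |disc a n| ≤ 1 := by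
  have h1 : (1 : ℝ) ≤ k.totient := by
    exact_mod_cast Nat.totient_pos.2 (Nat.pos_of_ne_zero (NeZero.ne k))
  have h2 : (k.totient : ℝ)⁻¹ ≤ 1 := inv_le_one_of_one_le₀ h1
  have h3 : 0 ≤ (k.totient : ℝ)⁻¹ := by positivity
  unfold disc
  rw [abs_le]
  split_ifs <;> constructor <;> linarith

/-- The logarithmically weighted form, obtained by removing the proper prime powers. -/
lemma tendsto_sum_disc_log {k : ℕ} [NeZero k] {a : ZMod k} (ha : IsUnit a) :
    Tendsto (fun n : ℕ => (∑ p ∈ Nat.primesLE n, disc a p * Real.log p) / n) atTop (𝓝 0) := by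
  have h1 := tendsto_residueClass ha
  have h2 := (tendsto_residueClass (k := 1) (a := 1) isUnit_one).mul_const ((k.totient : ℝ)⁻¹)
  have h3 := h1.sub h2
  simp only [Nat.totient_one, Nat.cast_one, inv_one, one_mul, sub_self] at h3
  have h4 : Tendsto (fun n : ℕ => 2 * (Real.log n / (n : ℝ) ^ (1 / 2 : ℝ))) atTop (𝓝 0) := by
    have := ((isLittleO_log_rpow_atTop (r := 1 / 2) (by norm_num)).tendsto_div_nhds_zero).comp
      (tendsto_natCast_atTop_atTop (R := ℝ))
    simpa using this.const_mul 2
  have h5 : Tendsto (fun n : ℕ => (∑ i ∈ Ioc 0 n with ¬ i.Prime,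
      disc a i * ArithmeticFunction.vonMangoldt i) / n) atTop (𝓝 0) := by
    refine squeeze_zero_norm' ?_ h4
    filter_upwards [eventually_ge_atTop 1] with n hn
    have hn' : (1 : ℝ) ≤ n := by exact_mod_cast hn
    rw [norm_div, Real.norm_of_nonneg (by positivity : (0 : ℝ) ≤ n), div_le_iff₀ (by positivity)]
    calc ‖∑ i ∈ Ioc 0 n with ¬ i.Prime, disc a i * ArithmeticFunction.vonMangoldt i‖
        ≤ ∑ i ∈ Ioc 0 n with ¬ i.Prime, ArithmeticFunction.vonMangoldt i := by
          refine norm_sum_le_of_le _ fun i _ => ?_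
          rw [norm_mul, Real.norm_eq_abs,
            Real.norm_of_nonneg ArithmeticFunction.vonMangoldt_nonneg]
          exact mul_le_of_le_one_left ArithmeticFunction.vonMangoldt_nonneg (abs_disc_le a i)
      _ = Chebyshev.psi n - Chebyshev.theta n := by
          rw [Chebyshev.psi_sub_theta_eq_sum_not_prime, Nat.floor_natCast]
      _ ≤ 2 * √n * Real.log n := Chebyshev.psi_sub_theta_le hn'
      _ = 2 * (Real.log n / (n : ℝ) ^ (1 / 2 : ℝ)) * n := by
          rw [← Real.sqrt_eq_rpow]
          have hsq := Real.mul_self_sqrt (by positivity : (0 : ℝ) ≤ n)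
          have : √(n : ℝ) ≠ 0 := by positivity
          field_simp
          rw [pow_two, hsq]
          ring
  have h6 := h3.sub h5
  rw [sub_zero] at h6
  refine h6.congr fun n => ?_
  rw [div_mul_eq_mul_div, ← sub_div, ← sub_div, sum_mul, ← sum_sub_distrib]
  congr 1
  have e : ∀ i ∈ Icc 1 n, ArithmeticFunction.vonMangoldt.residueClass a i -
      ArithmeticFunction.vonMangoldt.residueClass (1 : ZMod 1) i * (k.totient : ℝ)⁻¹ =
      disc a i * ArithmeticFunction.vonMangoldt i := by
    intro i _
    unfold disc
    have : ((i : ZMod 1) = 1) = True := by simp [Subsingleton.elim (i : ZMod 1) 1]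
    simp only [ArithmeticFunction.vonMangoldt.residueClass, Set.indicator_apply,
      Set.mem_ofPred_eq, this, if_true]
    split_ifs <;> ring
  rw [sum_congr rfl e, show Icc 1 n = Ioc 0 n from rfl,
    ← sum_filter_add_sum_filter_not (Ioc 0 n) Nat.Prime, add_sub_cancel_right,
    Nat.primesLE_eq_filter_Ioc_zero]
  refine sum_congr rfl fun p hp => ?_
  rw [ArithmeticFunction.vonMangoldt_apply_prime (mem_filter.1 hp).2]

/-- Prime number theorem in arithmetic progressions, in the form
`π(n; k, a) - π(n) / φ(k) = o(n / log n)`. -/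
lemma eventually_sum_disc_le {k : ℕ} [NeZero k] {a : ZMod k} (ha : IsUnit a) {ε : ℝ}
    (hε : 0 < ε) :
    ∀ᶠ n : ℕ in atTop, |∑ p ∈ Nat.primesLE n, disc a p| ≤ ε * (n / Real.log n) := by
  obtain ⟨C, hC⟩ := (Chebyshev.primeCounting_sub_theta_div_log_isBigO.comp_tendsto
    (tendsto_natCast_atTop_atTop (R := ℝ))).bound
  have h1 := (tendsto_sum_disc_log ha).abs
  rw [abs_zero] at h1
  have hlog : Tendsto (fun n : ℕ => Real.log n) atTop atTop :=
    Real.tendsto_log_atTop.comp tendsto_natCast_atTop_atTop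
  have h2 : Tendsto (fun n : ℕ => C / Real.log n) atTop (𝓝 0) := hlog.const_div_atTop C
  filter_upwards [hC, h1.eventually (gt_mem_nhds (half_pos hε)),
    h2.eventually (gt_mem_nhds (half_pos hε)), hlog.eventually_gt_atTop 0,
    eventually_gt_atTop 0] with n hn1 hn2 hn3 hl hn
  have hn' : (0 : ℝ) < n := by exact_mod_cast hn
  simp only [Function.comp_apply, Nat.floor_natCast] at hn1
  rw [abs_div, abs_of_pos hn', div_lt_iff₀ hn'] at hn2
  set E := ∑ p ∈ Nat.primesLE n, disc a p
  have hsplit : E * Real.log n = (∑ p ∈ Nat.primesLE n, disc a p * Real.log p) +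
      ∑ p ∈ Nat.primesLE n, disc a p * (Real.log n - Real.log p) := by
    rw [← sum_add_distrib, sum_mul]
    exact sum_congr rfl fun p _ => by ring
  have hsec : |∑ p ∈ Nat.primesLE n, disc a p * (Real.log n - Real.log p)| ≤
      C * (n / Real.log n) := by
    calc _ ≤ ∑ p ∈ Nat.primesLE n, (Real.log n - Real.log p) := by
          refine (abs_sum_le_sum_abs _ _).trans (sum_le_sum fun p hp => ?_)
          have hp0 : (0 : ℝ) < p := by exact_mod_cast (Nat.prime_of_mem_primesLE hp).pos
          have : 0 ≤ Real.log n - Real.log p := sub_nonneg.2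
            (Real.log_le_log hp0 (by exact_mod_cast Nat.le_of_mem_primesLE hp))
          rw [abs_mul, abs_of_nonneg this]
          exact mul_le_of_le_one_left this (abs_disc_le a p)
      _ = (n.primeCounting - Chebyshev.theta n / Real.log n) * Real.log n := by
          rw [sum_sub_distrib, sum_const, Nat.primesLE_card_eq_primeCounting,
            ← Chebyshev.theta_eq_sum_primesLE_log]
          field_simp
          simp
      _ ≤ (C * (n / Real.log n ^ 2)) * Real.log n := by
          refine mul_le_mul_of_nonneg_right ((le_abs_self _).trans ?_) hl.le
          rw [Real.norm_eq_abs, Real.norm_of_nonneg (by positivity)] at hn1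
          exact hn1
      _ = _ := by field_simp
  rw [← mul_div_assoc, le_div_iff₀ hl]
  calc |E| * Real.log n = |E * Real.log n| := by rw [abs_mul, abs_of_pos hl]
    _ ≤ ε / 2 * n + C * (n / Real.log n) := by
        rw [hsplit]
        exact (abs_add_le _ _).trans (add_le_add hn2.le hsec)
    _ ≤ ε / 2 * n + ε / 2 * n := by
        have : C * (n / Real.log n) = C / Real.log n * n := by ring
        rw [this]
        gcongr
    _ = ε * n := by ring

/-! ### Smooth numbers and the largest prime divisor -/

/-- The largest prime divisor of `n`, with value `0` for `n ≤ 1`. -/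
def maxFac (n : ℕ) : ℕ := n.primeFactors.sup id

lemma maxFac_le_iff {n y : ℕ} : maxFac n ≤ y ↔ ∀ p ∈ n.primeFactors, p ≤ y := by
  simp [maxFac, Finset.sup_le_iff]

lemma maxFac_mem {n : ℕ} (hn : 2 ≤ n) : maxFac n ∈ n.primeFactors := by
  have : n.primeFactors.Nonempty := Nat.nonempty_primeFactors.2 hn
  obtain ⟨p, hp, h⟩ := Finset.exists_mem_eq_sup _ this id
  unfold maxFac
  rw [h]
  exact hp

lemma maxFac_mul_prime {n p : ℕ} (hn : n ≠ 0) (hp : p.Prime) (h : maxFac n ≤ p) :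
    maxFac (n * p) = p := by
  unfold maxFac at *
  rw [Nat.primeFactors_mul hn hp.ne_zero, hp.primeFactors, sup_union, sup_singleton]
  exact max_eq_right h

lemma maxFac_div_le {n : ℕ} (hn : n ≠ 0) (d : ℕ) (hd : d ∣ n) : maxFac (n / d) ≤ maxFac n := by
  exact Finset.sup_mono (Nat.primeFactors_mono (Nat.div_dvd_of_dvd hd) hn)

/-- The logarithm of the largest `y`-smooth divisor of `n`. -/
noncomputable def logSmooth (y n : ℕ) : ℝ :=
  ∑ p ∈ Nat.primesLE y, (n.factorization p : ℝ) * Real.log p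

lemma logSmooth_eq_log {y n : ℕ} (h : maxFac n ≤ y) :
    logSmooth y n = Real.log n := by
  rw [Real.log_nat_eq_sum_factorization, Finsupp.sum, logSmooth]
  symm
  refine sum_subset (fun p hp => ?_) fun p _ hp => ?_
  · rw [Nat.support_factorization] at hp
    exact Nat.mem_primesLE.2 ⟨maxFac_le_iff.1 h p hp, Nat.prime_of_mem_primeFactors hp⟩
  · rw [Finsupp.notMem_support_iff.1 hp]
    simp

lemma logSmooth_nonneg (y n : ℕ) : 0 ≤ logSmooth y n :=
  sum_nonneg fun _ _ => mul_nonneg (by positivity) (Real.log_natCast_nonneg _)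

lemma logSmooth_factorial (y X : ℕ) :
    logSmooth y X.factorial = ∑ n ∈ Icc 1 X, logSmooth y n := by
  induction X with
  | zero => simp [logSmooth]
  | succ X ih =>
    rw [sum_Icc_succ_top (by omega), ← ih, Nat.factorial_succ]
    unfold logSmooth
    rw [← sum_add_distrib]
    refine sum_congr rfl fun p _ => ?_
    rw [Nat.factorization_mul (by omega) (Nat.factorial_ne_zero _), Finsupp.add_apply]
    push_cast
    ring

lemma div_le_factorization_factorial {p : ℕ} (hp : p.Prime) (X : ℕ) :
    (X : ℝ) / p - 1 ≤ (X.factorial.factorization p : ℝ) := by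
  have h1 : X / p ≤ X.factorial.factorization p := by
    rw [Nat.factorization_factorial hp (b := Nat.log p X + 2) (by omega)]
    refine le_trans (by simp) (single_le_sum (f := fun i => X / p ^ i) (fun _ _ => Nat.zero_le _)
      (mem_Ico.2 ⟨le_refl 1, by omega⟩))
  have h2 : (X : ℝ) / p < (X / p : ℕ) + 1 := by
    rw [← Nat.floor_div_eq_div (K := ℝ)]
    exact Nat.lt_floor_add_one _
  have h3 : ((X / p : ℕ) : ℝ) ≤ (X.factorial.factorization p : ℝ) := by exact_mod_cast h1
  linarith

lemma factorization_factorial_le {p : ℕ} (hp : p.Prime) (X : ℕ) :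
    (X.factorial.factorization p : ℝ) ≤ 2 * X / p := by
  have := Fact.mk hp
  have h := sub_one_mul_padicValNat_factorial (p := p) X
  rw [← Nat.factorization_def _ hp] at h
  have h1 : (p - 1) * X.factorial.factorization p ≤ X := by omega
  have h2 : p ≤ 2 * (p - 1) := by have := hp.two_le; omega
  have h3 : p * X.factorial.factorization p ≤ 2 * X := by
    calc _ ≤ 2 * (p - 1) * X.factorial.factorization p := Nat.mul_le_mul_right _ h2
      _ = 2 * ((p - 1) * X.factorial.factorization p) := by ring
      _ ≤ _ := by omega
  rw [le_div_iff₀ (by exact_mod_cast hp.pos)]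
  rw [mul_comm] at h3
  exact_mod_cast h3

/-- The upper bound in Mertens' first theorem. -/
lemma sum_log_div_le {y : ℕ} (hy : y ≠ 0) :
    ∑ p ∈ Nat.primesLE y, Real.log p / p ≤ Real.log y + Real.log 4 := by
  have hy' : (0 : ℝ) < y := by positivity
  have h1 : (y : ℝ) * ∑ p ∈ Nat.primesLE y, Real.log p / p ≤
      logSmooth y y.factorial + Chebyshev.theta y := by
    rw [Chebyshev.theta_eq_sum_primesLE_log, logSmooth, ← sum_add_distrib, mul_sum]
    refine sum_le_sum fun p hp => ?_
    have hp' := Nat.prime_of_mem_primesLE hp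
    have := mul_le_mul_of_nonneg_right (div_le_factorization_factorial hp' y)
      (Real.log_natCast_nonneg p)
    calc (y : ℝ) * (Real.log p / p) = ((y : ℝ) / p - 1) * Real.log p + Real.log p := by ring
      _ ≤ _ := by linarith
  have h2 : logSmooth y y.factorial ≤ y * Real.log y := by
    rw [logSmooth_eq_log
      (maxFac_le_iff.2 fun p hp => (Nat.prime_of_mem_primeFactors hp).dvd_factorial.1
        (Nat.dvd_of_mem_primeFactors hp)), ← Real.log_pow]
    refine Real.log_le_log (by positivity) ?_
    exact_mod_cast Nat.factorial_le_pow y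
  have h3 := Chebyshev.theta_le_log4_mul_x hy'.le
  refine le_of_mul_le_mul_left ?_ hy'
  calc _ ≤ _ := h1
    _ ≤ y * Real.log y + Real.log 4 * y := add_le_add h2 h3
    _ = _ := by ring

/-- An upper bound for the number of `y`-smooth integers up to `X`, by double counting
`∑ log n` over them. -/
lemma card_smooth_le {y X : ℕ} (hy : y ≠ 0) (hX : X ≠ 0) :
    (#{n ∈ Icc 1 X | maxFac n ≤ y} : ℝ) * Real.log X ≤
      √X * Real.log X + 4 * X * (Real.log y + Real.log 4) := by
  have hlX : 0 ≤ Real.log X := Real.log_natCast_nonneg X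
  have h1 : ∑ n ∈ Icc 1 X with maxFac n ≤ y, Real.log n ≤
      2 * X * (Real.log y + Real.log 4) := by
    calc ∑ n ∈ Icc 1 X with maxFac n ≤ y, Real.log n
        = ∑ n ∈ Icc 1 X with maxFac n ≤ y, logSmooth y n := by
          refine sum_congr rfl fun n hn => ?_
          rw [mem_filter, mem_Icc] at hn
          exact (logSmooth_eq_log hn.2).symm
      _ ≤ ∑ n ∈ Icc 1 X, logSmooth y n :=
          sum_le_sum_of_subset_of_nonneg (filter_subset _ _) fun _ _ _ => logSmooth_nonneg _ _
      _ = ∑ p ∈ Nat.primesLE y, (X.factorial.factorization p : ℝ) * Real.log p := by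
          rw [← logSmooth_factorial, logSmooth]
      _ ≤ ∑ p ∈ Nat.primesLE y, 2 * X * (Real.log p / p) := by
          refine sum_le_sum fun p hp => ?_
          calc _ ≤ 2 * X / p * Real.log p := mul_le_mul_of_nonneg_right
                (factorization_factorial_le (Nat.prime_of_mem_primesLE hp) X)
                (Real.log_natCast_nonneg p)
            _ = _ := by ring
      _ ≤ _ := by
          rw [← mul_sum]
          exact mul_le_mul_of_nonneg_left (sum_log_div_le hy) (by positivity)
  have h2 : ∑ n ∈ Icc 1 X with maxFac n ≤ y, (Real.log X - 2 * Real.log n) ≤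
      √X * Real.log X := by
    calc ∑ n ∈ Icc 1 X with maxFac n ≤ y, (Real.log X - 2 * Real.log n)
        ≤ ∑ n ∈ Icc 1 X, if n ≤ Nat.sqrt X then Real.log X else 0 := by
          rw [sum_filter]
          refine sum_le_sum fun n hn => ?_
          rw [mem_Icc] at hn
          have hn0 : 0 ≤ Real.log n := Real.log_natCast_nonneg n
          by_cases hs : n ≤ Nat.sqrt X
          · rw [if_pos hs]
            split_ifs <;> linarith
          · rw [if_neg hs]
            have : Real.log X ≤ 2 * Real.log n := by
              have hlt := Nat.sqrt_lt'.1 (not_le.1 hs)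
              have := Real.log_le_log (x := X) (y := (n : ℝ) ^ 2) (by positivity)
                (by exact_mod_cast hlt.le)
              rwa [Real.log_pow] at this
            split_ifs <;> linarith
      _ = (#{n ∈ Icc 1 X | n ≤ Nat.sqrt X} : ℝ) * Real.log X := by
          rw [← sum_filter, sum_const, nsmul_eq_mul]
      _ ≤ _ := by
          refine mul_le_mul_of_nonneg_right ?_ hlX
          refine le_trans ?_ (Real.nat_sqrt_le_real_sqrt)
          have : #{n ∈ Icc 1 X | n ≤ Nat.sqrt X} ≤ #(Icc 1 (Nat.sqrt X)) :=
            card_le_card fun n hn => by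
              rw [mem_filter, mem_Icc] at hn
              exact mem_Icc.2 ⟨hn.1.1, hn.2⟩
          rw [Nat.card_Icc] at this
          exact_mod_cast this
  rw [sum_sub_distrib, sum_const, nsmul_eq_mul, ← mul_sum] at h2
  linarith

/-- Writing `N = n p` with `p` the largest prime divisor of `N`. -/
lemma sum_maxFac_eq (F : ℕ → ℝ) (X y : ℕ) :
    ∑ N ∈ Icc 1 X with y < maxFac N, F (maxFac N) =
      ∑ n ∈ Icc 1 X, ∑ p ∈ Nat.primesLE (X / n) with max (maxFac n - 1) y < p, F p := by
  rw [sum_sigma']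
  have key : ∀ N ∈ {N ∈ Icc 1 X | y < maxFac N}, maxFac N ∣ N ∧ (maxFac N).Prime ∧ 1 ≤ N ∧
      N ≤ X ∧ y < maxFac N := by
    intro N hN
    rw [mem_filter, mem_Icc] at hN
    have h2 : 2 ≤ N := by
      by_contra h
      have : N = 1 := by omega
      subst this
      simp [maxFac] at hN
    have := maxFac_mem h2
    exact ⟨Nat.dvd_of_mem_primeFactors this, Nat.prime_of_mem_primeFactors this, hN.1.1, hN.1.2,
      hN.2⟩
  refine sum_bij' (fun N _ => ⟨N / maxFac N, maxFac N⟩) (fun q _ => q.1 * q.2) ?_ ?_ ?_ ?_ ?_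
  · intro N hN
    obtain ⟨hd, hp, h1, hX, hy⟩ := key N hN
    have hdm := maxFac_div_le (by omega) _ hd
    have := hp.pos
    have hmul := Nat.div_mul_cancel hd
    have hpos : 0 < N / maxFac N := Nat.div_pos (Nat.le_of_dvd h1 hd) this
    simp only [mem_sigma, mem_Icc, mem_filter, Nat.mem_primesLE]
    refine ⟨⟨hpos, (Nat.div_le_self _ _).trans hX⟩, ⟨?_, hp⟩, by omega⟩
    rw [Nat.le_div_iff_mul_le hpos, mul_comm, hmul]
    exact hX
  · rintro ⟨n, p⟩ hq
    simp only [mem_sigma, mem_Icc, mem_filter, Nat.mem_primesLE] at hq ⊢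
    obtain ⟨⟨hn, hnX⟩, ⟨hpX, hp⟩, hlt⟩ := hq
    have hm := maxFac_mul_prime (n := n) (by omega) hp (by omega)
    rw [hm]
    rw [Nat.le_div_iff_mul_le (by omega), mul_comm] at hpX
    exact ⟨⟨Nat.mul_pos hn hp.pos, hpX⟩, by omega⟩
  · intro N hN
    exact Nat.div_mul_cancel (key N hN).1
  · rintro ⟨n, p⟩ hq
    simp only [mem_sigma, mem_Icc, mem_filter, Nat.mem_primesLE] at hq
    obtain ⟨⟨hn, hnX⟩, ⟨hpX, hp⟩, hlt⟩ := hq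
    have hm := maxFac_mul_prime (n := n) (by omega) hp (by omega)
    simp only [hm, Nat.mul_div_cancel _ hp.pos]
  · intro N _
    rfl

/-- In `sum_maxFac_eq` every inner sum is a difference of two values of `∑_{p ≤ z} disc a p`, and
the bounds `ε (X / n) / log y` for these add up to a harmonic sum. -/
lemma abs_sum_rough_le {k : ℕ} {a : ZMod k} {ε : ℝ} (hε : 0 ≤ ε) {y : ℕ} (hy2 : 2 ≤ y)
    (hy : ∀ n : ℕ, y ≤ n → |∑ p ∈ Nat.primesLE n, disc a p| ≤ ε * (n / Real.log n)) (X : ℕ) :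
    |∑ N ∈ Icc 1 X with y < maxFac N, disc a (maxFac N)| ≤
      2 * ε * X * (1 + Real.log X) / Real.log y := by
  have hly : 0 < Real.log y := Real.log_pos (by exact_mod_cast hy2)
  have hE : ∀ n z : ℕ, y ≤ n → n ≤ z →
      |∑ p ∈ Nat.primesLE n, disc a p| ≤ ε * (z / Real.log y) := by
    intro n z hn hz
    refine (hy n hn).trans (mul_le_mul_of_nonneg_left ?_ hε)
    have : Real.log y ≤ Real.log n := Real.log_le_log (by positivity) (by exact_mod_cast hn)
    have : (n : ℝ) ≤ z := by exact_mod_cast hz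
    gcongr
  have hin : ∀ t z : ℕ, y ≤ t →
      |∑ p ∈ Nat.primesLE z with t < p, disc a p| ≤ 2 * ε * (z / Real.log y) := by
    intro t z ht
    by_cases htz : t ≤ z
    · have hs : ∑ p ∈ Nat.primesLE z with t < p, disc a p =
          ∑ p ∈ Nat.primesLE z, disc a p - ∑ p ∈ Nat.primesLE t, disc a p := by
        rw [← sum_filter_add_sum_filter_not (Nat.primesLE z) (fun p => t < p)]
        have : {p ∈ Nat.primesLE z | ¬ t < p} = Nat.primesLE t := by
          ext p
          simp only [mem_filter, Nat.mem_primesLE]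
          constructor
          · rintro ⟨⟨h1, h2⟩, h3⟩
            exact ⟨by omega, h2⟩
          · rintro ⟨h1, h2⟩
            exact ⟨⟨by omega, h2⟩, by omega⟩
        rw [this]
        ring
      rw [hs]
      refine (abs_sub _ _).trans ?_
      linarith [hE z z (ht.trans htz) le_rfl, hE t z ht htz]
    · have : {p ∈ Nat.primesLE z | t < p} = ∅ := by
        refine filter_eq_empty_iff.2 fun p hp => ?_
        have := Nat.le_of_mem_primesLE hp
        omega
      rw [this, sum_empty, abs_zero]
      positivity
  rw [sum_maxFac_eq]
  calc _ ≤ ∑ n ∈ Icc 1 X, 2 * ε * (X / Real.log y) * (n : ℝ)⁻¹ := by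
        refine (abs_sum_le_sum_abs _ _).trans (sum_le_sum fun n hn => ?_)
        refine (hin _ _ (le_max_right _ _)).trans ?_
        have : ((X / n : ℕ) : ℝ) ≤ X / n := Nat.cast_div_le
        calc 2 * ε * (((X / n : ℕ) : ℝ) / Real.log y) ≤ 2 * ε * ((X / n : ℝ) / Real.log y) := by
              gcongr
          _ = _ := by ring
    _ = 2 * ε * (X / Real.log y) * (harmonic X : ℝ) := by
        rw [← mul_sum, harmonic_eq_sum_Icc]
        push_cast
        rfl
    _ ≤ 2 * ε * (X / Real.log y) * (1 + Real.log X) := by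
        have := harmonic_le_one_add_log X
        gcongr
    _ = _ := by ring

/-- The proportion of `X ^ δ`-smooth integers up to `X` is small when `δ` is. -/
lemma eventually_card_smooth_le {δ : ℝ} (hδ : 0 < δ) :
    ∀ᶠ X : ℕ in atTop, (#{n ∈ Icc 1 X | maxFac n ≤ ⌊(X : ℝ) ^ δ⌋₊} : ℝ) ≤ 6 * δ * X := by
  have hlog : Tendsto (fun n : ℕ => Real.log n) atTop atTop :=
    Real.tendsto_log_atTop.comp tendsto_natCast_atTop_atTop
  have hs : Tendsto (fun n : ℕ => √(n : ℝ)) atTop atTop :=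
    Real.tendsto_sqrt_atTop.comp tendsto_natCast_atTop_atTop
  filter_upwards [hlog.eventually_ge_atTop (4 * Real.log 4 / δ), hlog.eventually_gt_atTop 0,
    hs.eventually_ge_atTop (1 / δ), eventually_ge_atTop 1] with X h1 h2 h3 h4
  have hX : (1 : ℝ) ≤ X := by exact_mod_cast h4
  have hy0 : ⌊(X : ℝ) ^ δ⌋₊ ≠ 0 := by
    have := Real.one_le_rpow hX hδ.le
    exact (Nat.floor_pos.2 this).ne'
  have h := card_smooth_le hy0 (by omega : X ≠ 0)
  have hly : Real.log ⌊(X : ℝ) ^ δ⌋₊ ≤ δ * Real.log X := by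
    rw [← Real.log_rpow (by positivity)]
    exact Real.log_le_log (by positivity) (Nat.floor_le (by positivity))
  rw [div_le_iff₀ hδ] at h1 h3
  have h5 : √(X : ℝ) ≤ δ * X := by
    have := Real.mul_self_sqrt (by positivity : (0 : ℝ) ≤ X)
    nlinarith [Real.sqrt_nonneg (X : ℝ)]
  refine le_of_mul_le_mul_right (h.trans ?_) h2
  have h6 : √(X : ℝ) * Real.log X ≤ δ * X * Real.log X := mul_le_mul_of_nonneg_right h5 h2.le
  have h7 : 4 * (X : ℝ) * (Real.log ⌊(X : ℝ) ^ δ⌋₊ + Real.log 4) ≤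
      4 * X * (δ * Real.log X) + X * (Real.log X * δ) := by
    nlinarith
  nlinarith

lemma tendsto_natFloor_rpow {δ : ℝ} (hδ : 0 < δ) :
    Tendsto (fun X : ℕ => ⌊(X : ℝ) ^ δ⌋₊) atTop atTop :=
  tendsto_nat_floor_atTop.comp ((tendsto_rpow_atTop hδ).comp tendsto_natCast_atTop_atTop)

lemma tendsto_card_maxFac_le (m : ℕ) :
    Tendsto (fun X : ℕ => (#{n ∈ Icc 1 X | maxFac n ≤ m} : ℝ) / X) atTop (𝓝 0) := by
  rw [Metric.tendsto_atTop']
  intro η hη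
  have h1 := (eventually_card_smooth_le (δ := η / 12) (by positivity)).and
    (((tendsto_natFloor_rpow (δ := η / 12) (by positivity)).eventually_ge_atTop m).and
      (eventually_ge_atTop 1))
  obtain ⟨N, hN⟩ := eventually_atTop.1 h1
  refine ⟨N, fun X hX => ?_⟩
  obtain ⟨h2, h3, h4⟩ := hN X hX.le
  have hX : (1 : ℝ) ≤ X := by exact_mod_cast h4
  rw [Real.dist_eq, sub_zero, abs_of_nonneg (by positivity), div_lt_iff₀ (by positivity)]
  have : #{n ∈ Icc 1 X | maxFac n ≤ m} ≤ #{n ∈ Icc 1 X | maxFac n ≤ ⌊(X : ℝ) ^ (η / 12)⌋₊} :=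
    card_le_card fun n hn => by
      rw [mem_filter] at hn ⊢
      exact ⟨hn.1, hn.2.trans h3⟩
  have : (#{n ∈ Icc 1 X | maxFac n ≤ m} : ℝ) ≤
      #{n ∈ Icc 1 X | maxFac n ≤ ⌊(X : ℝ) ^ (η / 12)⌋₊} := by exact_mod_cast this
  nlinarith

/-- Equidistribution of the largest prime divisor over the reduced residue classes. -/
lemma tendsto_sum_disc_maxFac {k : ℕ} [NeZero k] {a : ZMod k} (ha : IsUnit a) :
    Tendsto (fun X : ℕ => (∑ N ∈ Icc 1 X, disc a (maxFac N)) / X) atTop (𝓝 0) := by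
  rw [Metric.tendsto_atTop']
  intro η hη
  set δ := η / 24 with hδd
  have hδ : 0 < δ := by positivity
  set ε := δ * η / 32 with hεd
  have hε : 0 < ε := by positivity
  obtain ⟨T, hT⟩ := eventually_atTop.1 (eventually_sum_disc_le ha hε)
  have hlog : Tendsto (fun n : ℕ => Real.log n) atTop atTop :=
    Real.tendsto_log_atTop.comp tendsto_natCast_atTop_atTop
  have h1 := (eventually_card_smooth_le hδ).and
    (((tendsto_natFloor_rpow hδ).eventually_ge_atTop (max T 2)).and
      ((eventually_ge_atTop 1).and ((hlog.eventually_ge_atTop 1).and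
        (hlog.eventually_ge_atTop (2 * Real.log 2 / δ)))))
  obtain ⟨N, hN⟩ := eventually_atTop.1 h1
  refine ⟨N, fun X hX => ?_⟩
  obtain ⟨h2, h3, h4, h5, h6⟩ := hN X hX.le
  have hX : (1 : ℝ) ≤ X := by exact_mod_cast h4
  set y := ⌊(X : ℝ) ^ δ⌋₊ with hyd
  have hr := abs_sum_rough_le (a := a) hε.le (y := y) (by omega)
    (fun n hn => hT n (by omega)) X
  have hs : |∑ N ∈ Icc 1 X with ¬ y < maxFac N, disc a (maxFac N)| ≤ 6 * δ * X := by
    refine le_trans ?_ h2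
    calc _ ≤ ∑ N ∈ Icc 1 X with ¬ y < maxFac N, (1 : ℝ) :=
          (abs_sum_le_sum_abs _ _).trans (sum_le_sum fun _ _ => abs_disc_le _ _)
      _ = _ := by simp only [sum_const, nsmul_eq_mul, mul_one, not_lt]
  have hly : δ / 2 * Real.log X ≤ Real.log y := by
    have hyX : (X : ℝ) ^ δ ≤ 2 * y := by
      have := Nat.lt_floor_add_one ((X : ℝ) ^ δ)
      have h1y : (1 : ℝ) ≤ y := by exact_mod_cast (by omega : 1 ≤ y)
      linarith
    have hy0 : (y : ℝ) ≠ 0 := by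
      have : y ≠ 0 := by omega
      exact_mod_cast this
    have := Real.log_le_log (by positivity) hyX
    rw [Real.log_rpow (by positivity), Real.log_mul (by norm_num) hy0] at this
    rw [div_le_iff₀ hδ] at h6
    linarith
  have hr2 : 2 * ε * X * (1 + Real.log X) / Real.log y ≤ η / 4 * X := by
    have : 0 < δ / 2 * Real.log X := by positivity
    rw [div_le_iff₀ (this.trans_le hly)]
    calc 2 * ε * X * (1 + Real.log X) ≤ 2 * ε * X * (2 * Real.log X) := by
          gcongr
          linarith
      _ = η / 4 * X * (δ / 2 * Real.log X) := by
          rw [hεd]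
          ring
      _ ≤ _ := by gcongr
  rw [Real.dist_eq, sub_zero, abs_div, abs_of_nonneg (by positivity : (0 : ℝ) ≤ X),
    div_lt_iff₀ (by positivity), ← sum_filter_add_sum_filter_not (Icc 1 X) (fun N => y < maxFac N)]
  refine (abs_add_le _ _).trans_lt ?_
  have : 6 * δ * X = η / 4 * X := by rw [hδd]; ring
  nlinarith

/-! ### Axer's theorem -/

/-- Partial summation against a decreasing weight. -/
lemma abs_sum_mul_antitone_le {g w : ℕ → ℝ} {a b : ℕ} {S : ℝ}
    (hS : ∀ j ≤ b, |∑ i ∈ Icc 1 j, g i| ≤ S) (hab : a + 1 ≤ b)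
    (hw0 : 0 ≤ w b) (hw : ∀ j, a + 1 ≤ j → w (j + 1) ≤ w j) :
    |∑ i ∈ Ioc a b, g i * w i| ≤ 2 * S * w (a + 1) := by
  set M : ℕ → ℝ := fun j => ∑ i ∈ Icc 1 j, g i with hM
  have hMs : ∀ j, M (j + 1) = M j + g (j + 1) := fun j => by
    simp only [hM]
    rw [sum_Icc_succ_top (by omega)]
  have hd : ∀ j ≤ b, |M j - M a| ≤ 2 * S := fun j hj =>
    (abs_sub _ _).trans (by linarith [hS j hj, hS a (by omega)])
  have key : ∀ c, a + 1 ≤ c → c ≤ b → |∑ i ∈ Ioc a c, g i * w i - (M c - M a) * w c| ≤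
      2 * S * (w (a + 1) - w c) := by
    intro c hc
    induction c, hc using Nat.le_induction with
    | base =>
      intro _
      rw [sum_Ioc_succ_top (by omega), Ioc_self, sum_empty, hMs]
      have : 0 + g (a + 1) * w (a + 1) - (M a + g (a + 1) - M a) * w (a + 1) = 0 := by ring
      rw [this]
      simp
    | succ c hc ih =>
      intro hcb
      have ih := ih (by omega)
      rw [sum_Ioc_succ_top (by omega), hMs]
      have e : ∑ i ∈ Ioc a c, g i * w i + g (c + 1) * w (c + 1) -
          (M c + g (c + 1) - M a) * w (c + 1) =
          (∑ i ∈ Ioc a c, g i * w i - (M c - M a) * w c) + (M c - M a) * (w c - w (c + 1)) := by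
        ring
      rw [e]
      refine (abs_add_le _ _).trans ?_
      rw [abs_mul, abs_of_nonneg (sub_nonneg.2 (hw c hc))]
      nlinarith [hd c (by omega), hw c hc]
  have h1 := key b hab le_rfl
  have h2 : |(M b - M a) * w b| ≤ 2 * S * w b := by
    rw [abs_mul, abs_of_nonneg hw0]
    exact mul_le_mul_of_nonneg_right (hd b le_rfl) hw0
  calc |∑ i ∈ Ioc a b, g i * w i|
      = |(∑ i ∈ Ioc a b, g i * w i - (M b - M a) * w b) + (M b - M a) * w b| := by
        rw [sub_add_cancel]
    _ ≤ _ := (abs_add_le _ _).trans (by linarith)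

/-- Axer's theorem: if `g` is bounded with mean value `0`, then `∑ g(n) ⌊N / n⌋` and
`N ∑ g(n) / n` differ by `o(N)`. -/
lemma axer {g : ℕ → ℝ} (hg : ∀ n, |g n| ≤ 1) {c : ℝ}
    (hM : Tendsto (fun N : ℕ => (∑ n ∈ Icc 1 N, g n) / N) atTop (𝓝 0))
    (hF : Tendsto (fun N : ℕ => (∑ n ∈ Icc 1 N, g n * (N / n : ℕ)) / N) atTop (𝓝 c)) :
    Tendsto (fun N : ℕ => ∑ n ∈ Icc 1 N, g n / n) atTop (𝓝 c) := by
  suffices h : Tendsto (fun N : ℕ => (∑ n ∈ Icc 1 N, g n * ((N : ℝ) / n - (N / n : ℕ))) / N)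
      atTop (𝓝 0) by
    have h2 := h.add hF
    rw [zero_add] at h2
    refine h2.congr' ?_
    filter_upwards [eventually_ge_atTop 1] with N hN
    have hN' : (N : ℝ) ≠ 0 := by positivity
    rw [← add_div, ← sum_add_distrib, sum_div]
    refine sum_congr rfl fun n _ => ?_
    field_simp
    ring
  rw [Metric.tendsto_atTop']
  intro θ hθ
  -- `ε` is the cut-off: the `n ≤ ε N` are estimated trivially
  obtain ⟨ε, hε, hε1, hεη⟩ : ∃ ε : ℝ, 0 < ε ∧ ε < 1 ∧ ε < θ / 2 :=
    ⟨min 1 (θ / 2) / 2, by positivity, by linarith [min_le_left 1 (θ / 2)],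
      by linarith [min_le_right 1 (θ / 2), lt_min one_pos (half_pos hθ)]⟩
  set η := ε * θ / 16 with hηd
  have hη : 0 < η := by positivity
  obtain ⟨T, hT⟩ := eventually_atTop.1
    ((hM.abs.eventually (gt_mem_nhds (by rwa [abs_zero] : |(0 : ℝ)| < η))))
  obtain ⟨N₀, hN₀⟩ := eventually_atTop.1 ((tendsto_natCast_atTop_atTop
    (R := ℝ)).eventually_ge_atTop (T / η))
  refine ⟨max N₀ 1, fun N hN => ?_⟩
  have hN0 := hN₀ N (by omega)
  have hN1 : 1 ≤ N := by omega
  have hNp : (0 : ℝ) < N := by positivity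
  have hS : ∀ j ≤ N, |∑ i ∈ Icc 1 j, g i| ≤ η * N := by
    intro j hj
    have hj' : (j : ℝ) ≤ N := by exact_mod_cast hj
    by_cases hjT : T ≤ j
    · rcases Nat.eq_zero_or_pos j with h0 | h0
      · subst h0
        simp
        positivity
      · have := hT j hjT
        have hj0 : (0 : ℝ) < j := by exact_mod_cast h0
        rw [abs_div, abs_of_pos hj0, div_lt_iff₀ hj0] at this
        nlinarith
    · have hjT' : (j : ℝ) ≤ T := by exact_mod_cast (by omega : j ≤ T)
      rw [div_le_iff₀ hη] at hN0
      calc _ ≤ ∑ i ∈ Icc 1 j, (1 : ℝ) :=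
            (abs_sum_le_sum_abs _ _).trans (sum_le_sum fun i _ => hg i)
        _ = j := by simp
        _ ≤ _ := by linarith
  set a := ⌊ε * N⌋₊ with had
  have haN : a < N := by
    rw [had, Nat.floor_lt (by positivity)]
    nlinarith
  have ha1 : (a : ℝ) ≤ ε * N := Nat.floor_le (by positivity)
  have ha2 : ε * N < a + 1 := Nat.lt_floor_add_one _
  have hwa : (N : ℝ) / (a + 1 : ℕ) ≤ 1 / ε := by
    push_cast
    rw [div_le_div_iff₀ (by positivity) hε]
    linarith
  have hsplit : ∀ u : ℕ → ℝ, ∑ n ∈ Icc 1 N, u n = ∑ n ∈ Icc 1 a, u n + ∑ n ∈ Ioc a N, u n := by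
    intro u
    exact (sum_Ioc_consecutive u (Nat.zero_le a) haN.le).symm
  have h1 : |∑ n ∈ Icc 1 a, g n * ((N : ℝ) / n - (N / n : ℕ))| ≤ ε * N := by
    refine le_trans ?_ ha1
    calc _ ≤ ∑ i ∈ Icc 1 a, (1 : ℝ) := by
          refine (abs_sum_le_sum_abs _ _).trans (sum_le_sum fun n _ => ?_)
          have e1 : ((N / n : ℕ) : ℝ) ≤ N / n := Nat.cast_div_le
          have e2 : (N : ℝ) / n < (N / n : ℕ) + 1 := by
            rw [← Nat.floor_div_eq_div (K := ℝ)]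
            exact Nat.lt_floor_add_one _
          rw [abs_mul, abs_of_nonneg (sub_nonneg.2 e1)]
          exact mul_le_one₀ (hg n) (sub_nonneg.2 e1) (by linarith)
      _ = a := by simp
  have h2 : |∑ n ∈ Ioc a N, g n * ((N : ℝ) / n)| ≤ 2 * (η * N) * (1 / ε) := by
    refine (abs_sum_mul_antitone_le (w := fun n : ℕ => (N : ℝ) / n) hS haN (by positivity)
      fun j hj => ?_).trans ?_
    · have : (0 : ℝ) < j := by exact_mod_cast (by omega : 0 < j)
      push_cast
      gcongr
      linarith
    · exact mul_le_mul_of_nonneg_left hwa (by positivity)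
  have h3 : |∑ n ∈ Ioc a N, g n * (N / n : ℕ)| ≤ 2 * (η * N) * (1 / ε) := by
    refine (abs_sum_mul_antitone_le (w := fun n : ℕ => ((N / n : ℕ) : ℝ)) hS haN (by positivity)
      fun j hj => ?_).trans ?_
    · exact_mod_cast Nat.div_le_div_left (by omega) (by omega)
    · exact mul_le_mul_of_nonneg_left (Nat.cast_div_le.trans hwa) (by positivity)
  rw [Real.dist_eq, sub_zero, abs_div, abs_of_pos hNp, div_lt_iff₀ hNp, hsplit]
  have e3 : ∑ n ∈ Ioc a N, g n * ((N : ℝ) / n - (N / n : ℕ)) =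
      ∑ n ∈ Ioc a N, g n * ((N : ℝ) / n) - ∑ n ∈ Ioc a N, g n * (N / n : ℕ) := by
    rw [← sum_sub_distrib]
    exact sum_congr rfl fun n _ => by ring
  rw [e3]
  have e4 : 2 * (η * N) * (1 / ε) = θ / 8 * N := by
    rw [hηd]
    field_simp
    ring
  rw [e4] at h2 h3
  have h4 := abs_sub (∑ n ∈ Ioc a N, g n * ((N : ℝ) / n)) (∑ n ∈ Ioc a N, g n * (N / n : ℕ))
  refine (abs_add_le _ _).trans_lt ?_
  nlinarith

/-! ### The weighted Möbius function -/

/-- The function `n ↦ μ(n) f(p(n))` on the integers `n ≥ 2` coprime to `m`, where `p(n)` is the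
smallest prime divisor, extended by `0`. -/
noncomputable def weight (m : ℕ) (f : ℕ → ℝ) (n : ℕ) : ℝ :=
  if 2 ≤ n ∧ n.Coprime m then (ArithmeticFunction.moebius n : ℝ) * f n.minFac else 0

lemma abs_moebius_le (n : ℕ) : |(ArithmeticFunction.moebius n : ℝ)| ≤ 1 := by
  exact_mod_cast ArithmeticFunction.abs_moebius_le_one (n := n)

lemma abs_weight_le {m : ℕ} {f : ℕ → ℝ} (hf : ∀ n, |f n| ≤ 1) (n : ℕ) : |weight m f n| ≤ 1 := by
  unfold weight
  split_ifs
  · rw [abs_mul]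
    exact mul_le_one₀ (abs_moebius_le n) (abs_nonneg _) (hf _)
  · simp

/-! ### The mean value of the weights -/

/-- The density `∏ (1 - 1 / p)` of the integers without prime divisors `≤ K` tends to `0`. -/
lemma exists_totient_primorial_le {η : ℝ} (hη : 0 < η) :
    ∃ K : ℕ, ((primorial K).totient : ℝ) ≤ η * primorial K := by
  have h := (not_summable_iff_tendsto_nat_atTop_of_nonneg
    (f := Set.indicator {p : ℕ | p.Prime} fun n => 1 / (n : ℝ))
    (fun n => Set.indicator_nonneg (fun _ _ => by positivity) n)).1 not_summable_one_div_on_primes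
  obtain ⟨K, hK⟩ := (((tendsto_add_atTop_iff_nat 1).2 h).eventually_ge_atTop
    (-Real.log η)).exists
  refine ⟨K, ?_⟩
  have h1 : ((primorial K).totient : ℝ) =
      primorial K * ∏ p ∈ Nat.primesLE K, (1 - (p : ℝ)⁻¹) := by
    have := Nat.totient_eq_mul_prod_factors (primorial K)
    rw [primeFactors_primorial] at this
    have h := congrArg (fun q : ℚ => (q : ℝ)) this
    push_cast at h
    exact h
  rw [h1, mul_comm η]
  refine mul_le_mul_of_nonneg_left ?_ (by positivity)
  calc ∏ p ∈ Nat.primesLE K, (1 - (p : ℝ)⁻¹)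
      ≤ ∏ p ∈ Nat.primesLE K, Real.exp (-(1 / (p : ℝ))) := by
        refine prod_le_prod (fun p hp => ?_) fun p hp => ?_
        · have : (1 : ℝ) ≤ p := by exact_mod_cast (Nat.prime_of_mem_primesLE hp).one_le
          linarith [inv_le_one_of_one_le₀ this]
        · have := Real.add_one_le_exp (-(1 / (p : ℝ)))
          rw [one_div] at *
          linarith
    _ = Real.exp (-∑ p ∈ range (K + 1), Set.indicator {p : ℕ | p.Prime}
          (fun n => 1 / (n : ℝ)) p) := by
        rw [← Real.exp_sum, sum_neg_distrib]
        congr 2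
        simp only [Set.indicator_apply, Set.mem_ofPred_eq]
        rw [← sum_filter]
        rfl
    _ ≤ Real.exp (Real.log η) := Real.exp_le_exp.2 (by linarith)
    _ = η := Real.exp_log hη

lemma coprime_primorial_iff {n j : ℕ} (hn : 2 ≤ n) : n.Coprime (primorial j) ↔ j < n.minFac := by
  constructor
  · intro h
    by_contra hlt
    have hp := Nat.minFac_prime (by omega : n ≠ 1)
    exact Nat.not_coprime_of_dvd_of_dvd hp.one_lt (Nat.minFac_dvd n)
      (hp.dvd_primorial_iff.2 (by omega)) h
  · intro h
    refine Nat.coprime_of_dvd fun p hp hpn hpj => ?_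
    have h1 := Nat.minFac_le_of_dvd hp.two_le hpn
    have h2 := hp.dvd_primorial_iff.1 hpj
    omega

/-- The indicator of the integers coprime to `m` and to all primes `≤ j`. -/
def rough (m j n : ℕ) : ℝ := if n.Coprime (m * primorial j) then 1 else 0

/-- `rough m j n - rough m (j + 1) n` detects the `n` with smallest prime divisor `j + 1`, so that
the weights are, up to integers free of prime divisors `≤ K`, a finite combination of
functions `n ↦ μ(n) [gcd(n, Q) = 1]`. -/
lemma abs_weight_sub_le {m : ℕ} {f : ℕ → ℝ} (hf : ∀ n, |f n| ≤ 1) (K : ℕ) {n : ℕ} (hn : 1 ≤ n) :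
    |weight m f n - ∑ j ∈ range K, f (j + 1) * ((ArithmeticFunction.moebius n : ℝ) * rough m j n -
      (ArithmeticFunction.moebius n : ℝ) * rough m (j + 1) n)| ≤
      if (primorial K).Coprime n then 1 else 0 := by
  rcases Nat.lt_or_ge n 2 with h2 | h2
  · have : n = 1 := by omega
    subst this
    simp [weight, rough]
  by_cases hc : n.Coprime m
  swap
  · have h0 : ∀ j, rough m j n = 0 := fun j => by
      unfold rough
      rw [if_neg]
      exact fun h => hc (Nat.Coprime.coprime_mul_right_right h)
    have hw : weight m f n = 0 := by
      unfold weight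
      rw [if_neg (by tauto)]
    simp only [h0, hw, mul_zero, sub_self, sum_const_zero, abs_zero]
    split_ifs <;> norm_num
  have hr : ∀ j, rough m j n = if j < n.minFac then 1 else 0 := fun j => by
    unfold rough
    have : n.Coprime (m * primorial j) ↔ j < n.minFac := by
      rw [Nat.coprime_mul_iff_right, coprime_primorial_iff h2]
      tauto
    simp only [this]
  have hdiff : ∀ j, f (j + 1) * ((ArithmeticFunction.moebius n : ℝ) * rough m j n -
      (ArithmeticFunction.moebius n : ℝ) * rough m (j + 1) n) =
      if j = n.minFac - 1 then (ArithmeticFunction.moebius n : ℝ) * f n.minFac else 0 := by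
    intro j
    have hpos := Nat.minFac_pos n
    rw [hr, hr]
    by_cases hj : j = n.minFac - 1
    · rw [if_pos (by omega), if_neg (by omega), if_pos hj, show j + 1 = n.minFac by omega]
      ring
    · rw [if_neg hj]
      by_cases hj2 : j < n.minFac
      · rw [if_pos hj2, if_pos (by omega)]
        ring
      · rw [if_neg hj2, if_neg (by omega)]
        ring
  simp only [hdiff]
  rw [sum_ite_eq' (range K)]
  simp only [Nat.coprime_comm (n := primorial K), coprime_primorial_iff h2, mem_range]
  have hpos := Nat.minFac_pos n
  by_cases hK : K < n.minFac
  · rw [if_neg (by omega), if_pos hK, sub_zero]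
    exact abs_weight_le hf n
  · rw [if_pos (by omega), if_neg hK]
    rw [weight, if_pos ⟨h2, hc⟩, sub_self, abs_zero]

lemma tendsto_sum_weight {m : ℕ} (hm : m ≠ 0) {f : ℕ → ℝ} (hf : ∀ n, |f n| ≤ 1) :
    Tendsto (fun N : ℕ => (∑ n ∈ Icc 1 N, weight m f n) / N) atTop (𝓝 0) := by
  have hR : ∀ j, Tendsto (fun N : ℕ => (∑ n ∈ Icc 1 N,
      (ArithmeticFunction.moebius n : ℝ) * rough m j n) / N) atTop (𝓝 0) := by
    intro j
    have := tendsto_moebius_coprime (Q := m * primorial j) (mul_ne_zero hm (primorial_ne_zero j))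
    simpa only [rough, mul_ite, mul_one, mul_zero] using this
  have hcomb : ∀ K : ℕ, Tendsto (fun N : ℕ => (∑ n ∈ Icc 1 N, ∑ j ∈ range K, f (j + 1) *
      ((ArithmeticFunction.moebius n : ℝ) * rough m j n -
      (ArithmeticFunction.moebius n : ℝ) * rough m (j + 1) n)) / N) atTop (𝓝 0) := by
    intro K
    have := tendsto_finsetSum (range K) fun j _ =>
      ((hR j).sub (hR (j + 1))).const_mul (f (j + 1))
    simp only [sub_self, mul_zero, sum_const_zero] at this
    refine this.congr fun N => ?_
    rw [sum_comm, sum_div]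
    refine sum_congr rfl fun j _ => ?_
    rw [← mul_sum, sum_sub_distrib]
    ring
  rw [Metric.tendsto_atTop']
  intro η hη
  obtain ⟨K, hK⟩ := exists_totient_primorial_le (η := η / 4) (by positivity)
  set Q := primorial K with hQ
  have hQ0 : (0 : ℝ) < Q := by exact_mod_cast primorial_pos K
  obtain ⟨N₁, hN₁⟩ := eventually_atTop.1
    ((hcomb K).abs.eventually (gt_mem_nhds (by rw [abs_zero]; positivity : |(0 : ℝ)| < η / 4)))
  obtain ⟨N₀, hN₀⟩ := eventually_atTop.1 ((tendsto_natCast_atTop_atTop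
    (R := ℝ)).eventually_ge_atTop (Q.totient / (η / 4)))
  refine ⟨max (max N₀ N₁) 1, fun N hN => ?_⟩
  have hN0 := hN₀ N (by omega)
  have hN1 := hN₁ N (by omega)
  have hNp : (0 : ℝ) < N := by exact_mod_cast (by omega : 0 < N)
  rw [div_le_iff₀ (by positivity)] at hN0
  rw [abs_div, abs_of_pos hNp, div_lt_iff₀ hNp] at hN1
  rw [Real.dist_eq, sub_zero, abs_div, abs_of_pos hNp, div_lt_iff₀ hNp]
  set B := ∑ n ∈ Icc 1 N, ∑ j ∈ range K, f (j + 1) *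
      ((ArithmeticFunction.moebius n : ℝ) * rough m j n -
      (ArithmeticFunction.moebius n : ℝ) * rough m (j + 1) n)
  have hcount : ((#{x ∈ Ico 1 (1 + N) | Q.Coprime x} : ℕ) : ℝ) ≤ η / 2 * N := by
    have h1 := Nat.Ico_filter_coprime_le 1 N (primorial_ne_zero K)
    have h2 : ((#{x ∈ Ico 1 (1 + N) | Q.Coprime x} : ℕ) : ℝ) ≤
        (Q.totient : ℝ) * ((N / Q : ℕ) + 1) := by exact_mod_cast h1
    have h3 : ((N / Q : ℕ) : ℝ) ≤ N / Q := Nat.cast_div_le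
    have h4 : (Q.totient : ℝ) * (N / Q : ℕ) ≤ η / 4 * N := by
      calc (Q.totient : ℝ) * (N / Q : ℕ) ≤ (η / 4 * Q) * (N / Q) := by gcongr
        _ = _ := by field_simp
    nlinarith
  have hrest : |∑ n ∈ Icc 1 N, weight m f n - B| ≤ η / 2 * N := by
    refine le_trans ?_ hcount
    rw [← sum_sub_distrib]
    calc _ ≤ ∑ n ∈ Icc 1 N, if Q.Coprime n then (1 : ℝ) else 0 :=
          (abs_sum_le_sum_abs _ _).trans
            (sum_le_sum fun n hn => abs_weight_sub_le hf K (mem_Icc.1 hn).1)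
      _ = _ := by
          rw [← sum_filter, sum_const, nsmul_eq_mul, mul_one, add_comm 1 N]
          rfl
  calc |∑ n ∈ Icc 1 N, weight m f n| = |(∑ n ∈ Icc 1 N, weight m f n - B) + B| := by
        rw [sub_add_cancel]
    _ ≤ _ := abs_add_le _ _
    _ < η * N := by nlinarith

/-! ### Duality between smallest and largest prime divisors -/

/-- Alladi's duality identity. With the value at `d = 1` put equal to `f(q)`, the summands cancel
in pairs `d`, `q d`, since `μ(q d) = -μ(d)` and adjoining the largest prime `q` does not
change the smallest one. -/
lemma sum_divisors_weight {m : ℕ} (hm : m ≠ 0) (f : ℕ → ℝ) {N : ℕ} (hN : 2 ≤ N)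
    (hq : m < maxFac N) : ∑ d ∈ N.divisors, weight m f d = -f (maxFac N) := by
  set q := maxFac N with hqd
  have hqmem := maxFac_mem hN
  rw [← hqd] at hqmem
  have hqp : q.Prime := Nat.prime_of_mem_primeFactors hqmem
  have hqN : q ∣ N := Nat.dvd_of_mem_primeFactors hqmem
  have hqm : q.Coprime m := by
    rw [Nat.Prime.coprime_iff_not_dvd hqp]
    exact fun h => absurd (Nat.le_of_dvd (by omega) h) (by omega)
  set G : ℕ → ℝ := fun d => weight m f d + if d = 1 then f q else 0 with hG
  have hGq : ∀ d, d ∣ N → Squarefree d → ¬ q ∣ d → G (q * d) = - G d := by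
    intro d hdN hds hqd
    have hd0 : d ≠ 0 := hds.ne_zero
    have hcop : q.Coprime d := (Nat.Prime.coprime_iff_not_dvd hqp).2 hqd
    have hmu : (ArithmeticFunction.moebius (q * d) : ℝ) = -ArithmeticFunction.moebius d := by
      rw [ArithmeticFunction.isMultiplicative_moebius.map_mul_of_coprime hcop,
        ArithmeticFunction.moebius_apply_prime hqp]
      push_cast
      ring
    have hqd2 : 2 ≤ q * d := hqp.two_le.trans (Nat.le_mul_of_pos_right _ (by omega))
    have hcm : (q * d).Coprime m ↔ d.Coprime m := by
      rw [Nat.coprime_mul_iff_left]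
      tauto
    simp only [hG, weight]
    rw [if_neg (by omega : q * d ≠ 1), add_zero, hmu]
    by_cases hd1 : d = 1
    · subst hd1
      simp [hqp.two_le, hqm, hqp.minFac_eq]
    · have hd2 : 2 ≤ d := by omega
      have hmin : (q * d).minFac = d.minFac := by
        refine le_antisymm (Nat.minFac_le_of_dvd (Nat.minFac_prime hd1).two_le
          ((Nat.minFac_dvd d).trans (dvd_mul_left d q))) ?_
        have hr := Nat.minFac_prime (by omega : q * d ≠ 1)
        rcases (Nat.Prime.dvd_mul hr).1 (Nat.minFac_dvd (q * d)) with h | h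
        · rw [(Nat.prime_dvd_prime_iff_eq hr hqp).1 h]
          exact maxFac_le_iff.1 (le_refl (maxFac N)) _ (Nat.mem_primeFactors.2
            ⟨Nat.minFac_prime hd1, (Nat.minFac_dvd d).trans hdN, by omega⟩)
        · exact Nat.minFac_le_of_dvd hr.two_le h
      rw [if_neg hd1, add_zero, hmin]
      simp only [hcm, hqd2, hd2, true_and]
      split_ifs <;> ring
  have h0 : ∑ d ∈ N.divisors with Squarefree d, G d = 0 := by
    refine sum_involution (fun d _ => if q ∣ d then d / q else q * d) ?_ ?_ ?_ ?_
    · intro d hd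
      rw [mem_filter, Nat.mem_divisors] at hd
      obtain ⟨⟨hdN, hN0⟩, hs⟩ := hd
      by_cases h : q ∣ d
      · rw [if_pos h]
        obtain ⟨e, rfl⟩ := h
        have he : ¬ q ∣ e := fun h => hqp.one_lt.ne' (Nat.isUnit_iff.1 (hs q
          (mul_dvd_mul_left q h)))
        rw [Nat.mul_div_cancel_left _ hqp.pos, hGq e ((dvd_mul_left e q).trans hdN)
          (hs.squarefree_of_dvd (dvd_mul_left e q)) he]
        ring
      · rw [if_neg h, hGq d hdN hs h]
        ring
    · intro d hd _
      rw [mem_filter, Nat.mem_divisors] at hd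
      have hd0 : 0 < d := Nat.pos_of_ne_zero hd.2.ne_zero
      split_ifs with h
      · exact (Nat.div_lt_self hd0 hqp.one_lt).ne
      · have := hqp.two_le
        nlinarith
    · intro d hd
      rw [mem_filter, Nat.mem_divisors] at hd ⊢
      obtain ⟨⟨hdN, hN0⟩, hs⟩ := hd
      split_ifs with h
      · exact ⟨⟨(Nat.div_dvd_of_dvd h).trans hdN, hN0⟩,
          hs.squarefree_of_dvd (Nat.div_dvd_of_dvd h)⟩
      · have hcop := (Nat.Prime.coprime_iff_not_dvd hqp).2 h
        exact ⟨⟨hcop.mul_dvd_of_dvd_of_dvd hqN hdN, hN0⟩,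
          (Nat.squarefree_mul hcop).2 ⟨hqp.squarefree, hs⟩⟩
    · intro d hd
      rw [mem_filter, Nat.mem_divisors] at hd
      obtain ⟨⟨hdN, hN0⟩, hs⟩ := hd
      by_cases h : q ∣ d
      · obtain ⟨e, rfl⟩ := h
        have he : ¬ q ∣ e := fun h => hqp.one_lt.ne' (Nat.isUnit_iff.1 (hs q
          (mul_dvd_mul_left q h)))
        simp [Nat.mul_div_cancel_left _ hqp.pos, he]
      · simp [h, Nat.mul_div_cancel_left _ hqp.pos]
  have h1 : ∑ d ∈ N.divisors with Squarefree d, G d = ∑ d ∈ N.divisors, G d := by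
    refine sum_subset (filter_subset _ _) fun d hd hns => ?_
    have hns' : ¬ Squarefree d := fun h => hns (mem_filter.2 ⟨hd, h⟩)
    have hd1 : d ≠ 1 := by
      rintro rfl
      exact hns' squarefree_one
    simp [hG, weight, ArithmeticFunction.moebius_eq_zero_of_not_squarefree hns', hd1]
  rw [h1] at h0
  simp only [hG, sum_add_distrib] at h0
  rw [sum_ite_eq' N.divisors, if_pos (Nat.one_mem_divisors.2 (by omega))] at h0
  linarith

/-- Only the squarefree divisors contribute, and those of an `m`-smooth number divide the
primorial of `m`. -/
lemma abs_sum_divisors_weight_le {m : ℕ} {f : ℕ → ℝ} (hf : ∀ n, |f n| ≤ 1) {N : ℕ}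
    (hq : maxFac N ≤ m) : |∑ d ∈ N.divisors, weight m f d| ≤ #(primorial m).divisors := by
  have h1 : ∑ d ∈ N.divisors with Squarefree d, weight m f d = ∑ d ∈ N.divisors, weight m f d := by
    refine sum_subset (filter_subset _ _) fun d hd hns => ?_
    have hns' : ¬ Squarefree d := fun h => hns (mem_filter.2 ⟨hd, h⟩)
    simp [weight, ArithmeticFunction.moebius_eq_zero_of_not_squarefree hns']
  rw [← h1]
  calc _ ≤ ∑ d ∈ N.divisors with Squarefree d, (1 : ℝ) :=
        (abs_sum_le_sum_abs _ _).trans (sum_le_sum fun d _ => abs_weight_le hf d)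
    _ = (#{d ∈ N.divisors | Squarefree d} : ℝ) := by simp
    _ ≤ _ := by
        refine Nat.cast_le.2 (card_le_card fun d hd => ?_)
        rw [mem_filter, Nat.mem_divisors] at hd
        rw [Nat.mem_divisors]
        refine ⟨?_, primorial_ne_zero m⟩
        rw [← Nat.prod_primeFactors_of_squarefree hd.2, primorial_eq_prod_primesLE]
        refine prod_dvd_prod_of_subset _ _ _ fun p hp => ?_
        exact Nat.mem_primesLE.2 ⟨maxFac_le_iff.1 hq p
          (Nat.primeFactors_mono hd.1.1 hd.1.2 hp), Nat.prime_of_mem_primeFactors hp⟩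

/-- Both sides count each `g(d)` once for every multiple of `d` up to `N`. -/
lemma sum_weight_mul_floor (m : ℕ) (f : ℕ → ℝ) (N : ℕ) :
    ∑ n ∈ Icc 1 N, weight m f n * (N / n : ℕ) =
      ∑ j ∈ Icc 1 N, ∑ d ∈ j.divisors, weight m f d := by
  have := ArithmeticFunction.sum_Ioc_mul_zeta_eq_sum
    (⟨weight m f, by simp [weight]⟩ : ArithmeticFunction ℝ) N
  refine this.symm.trans (sum_congr rfl fun j _ => ?_)
  exact ArithmeticFunction.coe_mul_zeta_apply

/-- The indicator of the residue class `a` mod `k`. -/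
noncomputable def classInd {k : ℕ} (a : ZMod k) (n : ℕ) : ℝ := if (n : ZMod k) = a then 1 else 0

lemma abs_classInd_le {k : ℕ} (a : ZMod k) (n : ℕ) : |classInd a n| ≤ 1 := by
  unfold classInd
  split_ifs <;> simp

lemma tendsto_sum_weight_floor {m : ℕ} (hm : m ≠ 0) {k : ℕ} [NeZero k] {a : ZMod k}
    (ha : IsUnit a) :
    Tendsto (fun N : ℕ => (∑ n ∈ Icc 1 N, weight m (classInd a) n * (N / n : ℕ)) / N) atTop
      (𝓝 (-(k.totient : ℝ)⁻¹)) := by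
  set c : ℝ := (k.totient : ℝ)⁻¹ with hc
  set C : ℝ := #(primorial m).divisors + 1 with hC
  -- the exceptional integers are those without prime divisor exceeding `m`
  have herr : Tendsto (fun N : ℕ => (∑ j ∈ Icc 1 N, (∑ d ∈ j.divisors, weight m (classInd a) d +
      disc a (maxFac j) + c)) / N) atTop (𝓝 0) := by
    have h1 := (tendsto_card_maxFac_le m).const_mul C
    rw [mul_zero] at h1
    refine squeeze_zero_norm (fun N => ?_) h1
    rw [norm_div, Real.norm_natCast, ← mul_div_assoc]
    gcongr
    calc _ ≤ ∑ j ∈ Icc 1 N, if maxFac j ≤ m then C else 0 := by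
          refine norm_sum_le_of_le _ fun j hj => ?_
          rw [mem_Icc] at hj
          have hd : disc a (maxFac j) + c = classInd a (maxFac j) := by
            simp [disc, classInd, hc]
          rw [add_assoc, hd, Real.norm_eq_abs]
          by_cases hjm : maxFac j ≤ m
          · rw [if_pos hjm]
            refine (abs_add_le _ _).trans ?_
            exact add_le_add (abs_sum_divisors_weight_le (abs_classInd_le a) hjm)
              (abs_classInd_le a _)
          · have hj2 : 2 ≤ j := by
              by_contra h
              have : j = 1 := by omega
              subst this
              simp [maxFac] at hjm
            rw [if_neg hjm, sum_divisors_weight hm _ hj2 (by omega)]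
            simp
      _ = _ := by
          rw [← sum_filter, sum_const, nsmul_eq_mul, mul_comm]
  have h2 := (herr.sub (tendsto_sum_disc_maxFac ha)).sub_const c
  rw [sub_zero, zero_sub] at h2
  refine h2.congr' ?_
  filter_upwards [eventually_ge_atTop 1] with N hN
  have hN' : (N : ℝ) ≠ 0 := by positivity
  rw [sum_weight_mul_floor, sum_add_distrib, sum_add_distrib, sum_const, nsmul_eq_mul,
    Nat.card_Icc, Nat.add_sub_cancel]
  field_simp
  ring

lemma tendsto_sum_weight_div {m : ℕ} (hm : m ≠ 0) {k : ℕ} [NeZero k] {a : ZMod k}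
    (ha : IsUnit a) :
    Tendsto (fun N : ℕ => ∑ n ∈ Icc 1 N, weight m (classInd a) n / n) atTop
      (𝓝 (-(k.totient : ℝ)⁻¹)) :=
  axer (abs_weight_le (abs_classInd_le a)) (tendsto_sum_weight hm (abs_classInd_le a))
    (tendsto_sum_weight_floor hm ha)

end Alladi

theorem alladi_formula_moebius_mul (m k : ℕ) (hm : 1 ≤ m) (hk : 1 ≤ k) (ℓ : ℤ)
    (hl : 1 ≤ ℓ) (hlk : Int.gcd ℓ k = 1) :
    Tendsto
      (fun x : ℝ =>
        ∑ n ∈ (Finset.Icc 2 ⌊x⌋₊).filter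
            (fun n => (Nat.minFac n : ℤ) ≡ ℓ [ZMOD (k : ℤ)]),
          (ArithmeticFunction.moebius (m * n) : ℝ) / n)
      atTop (nhds (-((ArithmeticFunction.moebius m : ℝ) / (Nat.totient k : ℝ)))) := by
  have : NeZero k := ⟨by omega⟩
  have ha : IsUnit ((ℓ : ℤ) : ZMod k) := by
    exact (ZMod.unitOfIsCoprime ℓ (Int.isCoprime_iff_gcd_eq_one.2 hlk)).isUnit
  have h := ((Alladi.tendsto_sum_weight_div (m := m) (by omega) ha).const_mul
    (ArithmeticFunction.moebius m : ℝ)).comp (tendsto_nat_floor_atTop (α := ℝ))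
  rw [mul_neg, ← div_eq_mul_inv] at h
  refine h.congr fun x => ?_
  simp only [Function.comp_apply]
  have hsub : Icc 2 ⌊x⌋₊ ⊆ Icc 1 ⌊x⌋₊ := Icc_subset_Icc_left (by norm_num)
  rw [mul_sum, sum_filter, ← sum_subset hsub]
  · refine sum_congr rfl fun n hn => ?_
    have hn2 := (mem_Icc.1 hn).1
    have hcong : (Nat.minFac n : ℤ) ≡ ℓ [ZMOD (k : ℤ)] ↔ ((n.minFac : ℕ) : ZMod k) = ℓ := by
      rw [← ZMod.intCast_eq_intCast_iff]
      simp
    simp only [Alladi.weight, Alladi.classInd, hcong, hn2, true_and]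
    by_cases hc : n.Coprime m
    · rw [ArithmeticFunction.isMultiplicative_moebius.map_mul_of_coprime hc.symm]
      rw [if_pos hc]
      split_ifs
      · push_cast
        ring
      · simp
    · have hns : ¬ Squarefree (m * n) := fun h =>
        hc (Nat.coprime_of_squarefree_mul h).symm
      simp [hc, ArithmeticFunction.moebius_eq_zero_of_not_squarefree hns]
  · intro n hn hn2
    have : ¬ 2 ≤ n := fun h => hn2 (mem_Icc.2 ⟨h, (mem_Icc.1 hn).2⟩)
    simp [Alladi.weight, this]
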